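/- Let d ≥ 2 and let (r₁,r₂,r₃) be a strictly admissible triple of positive reals. For each integer n ≥ 3 there exists A < 1/2 such that for all ordered triples (G₁,G₂,G₃) of real spherical harmonics of degree n on S^{d−1}, Q(G₁,G₂,G₃) ≤ A · Σ_{k=1}^3 γ_k r_k^{1−d} ‖G_k‖²_{L²(S^{d−1})}. -/

import Mathlib

/-!
Write `d = e + 2` and `n = m + 1`. The form `Q_k` pairs `F` and `G` through the indicator of the cap
`⟨x, y⟩ ≤ s_k`, with `s_k = (r_k² - r_i² - r_j²) / (2 r_i r_j)`. By a Funk–Hecke formula (`capI_eq`)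
the integral of a degree `n` spherical harmonic `P` over such a cap is `-D(s_k) P(x)`, where
`D(s) = discD e m s` is the integral of `Re (s + i z₀)^m` over the ball of radius `√(1 - s²)` in
`ℝ^{d-1}`. This formula is obtained by comparing moments in `s`: the moments of `P` against powers of
`⟨x, y⟩` are computed by Gaussian integration by parts (`gaussL_funkHecke`), which relates them to the
moments of the harmonic polynomial `Re (y₀ + i y₁)^m` of one degree less on the unit ball
(`sphere_poly`).

Let `T` be twice the area of the triangle with sides `r₁, r₂, r₃`, and let `ε_k` be the unit complex
number `s_k + i T / (r_i r_j)`. Since the exterior angles of a triangle add up to `2π`,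
`ε₁ ε₂ ε₃ = 1` (`phase_prod`). The binomial theorem gives (`discD_eq`)
`D(s_k) = (T / (r_i r_j))^{d-1} ∑_l c_l Re (ε_k^l conj(ε_k)^{m-l})` with weights `c_l > 0` whose sum
is the volume `v` of the unit ball of `ℝ^{d-1}`, and slicing the intersection of two balls gives
`γ_k = v (T / r_k)^{d-1}` (`gammaCoef_eq`). Hence, with `g_k = (√T / r_k)^{d-1} G_k`, the right-hand
sum is `v ∑ ‖g_k‖²` and, because the phases multiply to one,
`½ v ∑ ‖g_k‖² - Q = ½ ∑_l c_l ‖g₁ + g₂ α_{3,l} + g₃ conj(α_{2,l})‖²`, `α_{k,l} = ε_k^l conj(ε_k)^{m-l}`.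
For `m ≥ 2` the three vectors `l = 0, 1, 2` form a Vandermonde system with distinct nodes, so that the
pointwise quadratic form is positive definite, and compactness of the sphere in `ℝ³` gives the gap
(`quad_gap`).
-/


open MeasureTheory Set

noncomputable section

/-- `ℝ^d` with Lebesgue measure. -/
abbrev Vec (d : ℕ) := EuclideanSpace ℝ (Fin d)

/-- Indicator function of a set, with value `1 : ℝ`. -/
def ind {d : ℕ} (E : Set (Vec d)) : Vec d → ℝ := E.indicator 1

/-- Convolution of two functions on `ℝ^d`. -/
def conv {d : ℕ} (f g : Vec d → ℝ) (x : Vec d) : ℝ := ∫ y, f y * g (x - y)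

/-- The rotation-invariant measure `σ` on the unit sphere `S^{d-1}`, normalized so that
Lebesgue measure equals `r^{d-1} dr dσ(θ)` in polar coordinates. -/
def sphereMeasure (d : ℕ) : Measure (Metric.sphere (0 : Vec d) 1) :=
  (volume : Measure (Vec d)).toSphere

/-- `G` is (the restriction to the unit sphere of) a real spherical harmonic of degree `n`:
a homogeneous polynomial of degree `n` with vanishing Laplacian. -/
def IsSphericalHarmonic (d n : ℕ) (G : Vec d → ℝ) : Prop :=
  ∃ P : MvPolynomial (Fin d) ℝ, P.IsHomogeneous n ∧
    (∑ i : Fin d, MvPolynomial.pderiv i (MvPolynomial.pderiv i P)) = 0 ∧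
    ∀ x : Vec d, ‖x‖ = 1 → G x = MvPolynomial.eval (fun i => x i) P

/-- The bilinear form `Q_k(F,G) = ∫∫ F(x) G(y) 1_{|r_i x + r_j y| ≤ r_k} dσ(x) dσ(y)`. -/
def Qform {d : ℕ} (r : Fin 3 → ℝ) (i j k : Fin 3) (F G : Vec d → ℝ) : ℝ :=
  ∫ x : Metric.sphere (0 : Vec d) 1, ∫ y : Metric.sphere (0 : Vec d) 1,
    F x * G y * (if ‖r i • (x : Vec d) + r j • (y : Vec d)‖ ≤ r k then (1:ℝ) else 0)
  ∂(sphereMeasure d) ∂(sphereMeasure d)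

/-- `Q(F₁,F₂,F₃) = Q₁(F₂,F₃) + Q₂(F₃,F₁) + Q₃(F₁,F₂)` (indices taken as `0,1,2`). -/
def Qtot {d : ℕ} (r : Fin 3 → ℝ) (F : Fin 3 → Vec d → ℝ) : ℝ :=
  Qform r 1 2 0 (F 1) (F 2) + Qform r 2 0 1 (F 2) (F 0) + Qform r 0 1 2 (F 0) (F 1)

/-- The squared `L²(S^{d-1})` norm. -/
def L2sq {d : ℕ} (G : Vec d → ℝ) : ℝ :=
  ∫ θ : Metric.sphere (0 : Vec d) 1, (G θ) ^ 2 ∂(sphereMeasure d)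

/-- A triple of positive reals is strictly admissible. -/
def StrictlyAdmissible (r : Fin 3 → ℝ) : Prop :=
  (∀ j, 0 < r j) ∧
  (∀ i j k : Fin 3, ({i, j, k} : Set (Fin 3)) = Set.univ → r k < r i + r j)

/-- The kernel `K_k = 1_{B_i} * 1_{B_j}`, where `{i,j,k} = {0,1,2}` and `B_m` is the
closed ball of radius `r_m` centered at `0`. -/
def Kker {d : ℕ} (r : Fin 3 → ℝ) (k : Fin 3) : Vec d → ℝ :=
  conv (ind (Metric.closedBall 0 (r (k + 1)))) (ind (Metric.closedBall 0 (r (k + 2))))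

/-- `γ_k = |∇K_k(x)|` for `|x| = r_k`; since `K_k` is radial this does not depend on the
choice of such `x`, and we evaluate at `r_k • e₀`. -/
def gammaCoef (d : ℕ) (r : Fin 3 → ℝ) (k : Fin 3) : ℝ :=
  if h : d = 0 then 0 else
    ‖fderiv ℝ (Kker r k)
      (r k • EuclideanSpace.single (⟨0, Nat.pos_of_ne_zero h⟩ : Fin d) (1 : ℝ))‖

namespace SpectralGap

/-! ### Polynomials and Gaussian integrals -/

open MvPolynomial in
/-- The value of the polynomial `P` at a point of `ℝ^d`. -/
def ev {d : ℕ} (P : MvPolynomial (Fin d) ℝ) (y : Vec d) : ℝ := eval (fun i => y i) P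

open MvPolynomial

section ev
variable {d : ℕ}

@[simp] lemma ev_add (P R : MvPolynomial (Fin d) ℝ) (y : Vec d) :
    ev (P + R) y = ev P y + ev R y := by simp [ev]
@[simp] lemma ev_mul (P R : MvPolynomial (Fin d) ℝ) (y : Vec d) :
    ev (P * R) y = ev P y * ev R y := by simp [ev]
@[simp] lemma ev_pow (P : MvPolynomial (Fin d) ℝ) (k : ℕ) (y : Vec d) :
    ev (P ^ k) y = ev P y ^ k := by simp [ev]
@[simp] lemma ev_C (c : ℝ) (y : Vec d) : ev (C c) y = c := by simp [ev]
@[simp] lemma ev_X (i : Fin d) (y : Vec d) : ev (X i) y = y i := by simp [ev]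
@[simp] lemma ev_sum {ι : Type*} (s : Finset ι) (P : ι → MvPolynomial (Fin d) ℝ) (y : Vec d) :
    ev (∑ i ∈ s, P i) y = ∑ i ∈ s, ev (P i) y := by simp [ev]

lemma continuous_ev (P : MvPolynomial (Fin d) ℝ) : Continuous (ev P) := by
  unfold ev
  exact (MvPolynomial.continuous_eval P).comp (by fun_prop)

lemma ev_smul_of_isHomogeneous {P : MvPolynomial (Fin d) ℝ} {n : ℕ} (hP : P.IsHomogeneous n)
    (t : ℝ) (y : Vec d) : ev P (t • y) = t ^ n * ev P y := by
  unfold ev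
  rw [MvPolynomial.eval_eq', MvPolynomial.eval_eq', Finset.mul_sum]
  refine Finset.sum_congr rfl fun e he => ?_
  have h := hP (MvPolynomial.mem_support_iff.1 he)
  have h' : ∑ i, e i = n := by
    rw [← h, Finsupp.weight_apply, Finsupp.sum_fintype _ _ (by simp)]
    simp
  simp only [PiLp.smul_apply, smul_eq_mul, mul_pow, Finset.prod_mul_distrib,
    Finset.prod_pow_eq_pow_sum, h']
  ring

lemma hasLineDerivAt_ev (P : MvPolynomial (Fin d) ℝ) (i : Fin d) (y : Vec d) :
    HasLineDerivAt ℝ (ev P) (ev (pderiv i P) y) y (EuclideanSpace.single i 1) := by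
  induction P using MvPolynomial.induction_on with
  | C a => simpa [HasLineDerivAt, ev] using hasDerivAt_const (0 : ℝ) a
  | add p q hp hq =>
    unfold HasLineDerivAt at *
    simpa using! hp.fun_add hq
  | mul_X p j hp =>
    unfold HasLineDerivAt at *
    have hX : HasDerivAt (fun t : ℝ => ev (X j) (y + t • EuclideanSpace.single i (1 : ℝ)))
        (ev (pderiv i (X j)) y) 0 := by
      by_cases h : j = i
      · subst h
        simpa [ev] using (hasDerivAt_id (0 : ℝ)).const_add (y j)
      · simpa [ev, h, pderiv_X_of_ne h] using hasDerivAt_const (0 : ℝ) (y j)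
    have := hp.mul hX
    simp only [Derivation.leibniz, smul_eq_mul, ev_add, ev_mul, zero_smul, add_zero] at this ⊢
    rw [show ev p y * ev ((pderiv i) (X j)) y + ev (X j) y * ev ((pderiv i) p) y
      = ev ((pderiv i) p) y * ev (X j) y + ev p y * ev ((pderiv i) (X j)) y by ring]
    exact this
end ev

section gauss
variable {d : ℕ}

lemma integrable_ev_mul_gauss (P : MvPolynomial (Fin d) ℝ) {b : ℝ} (hb : 0 < b) :
    Integrable (fun y : Vec d => ev P y * Real.exp (-b * ‖y‖ ^ 2)) := by
  induction P using MvPolynomial.induction_on generalizing b with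
  | C a =>
    simp only [ev_C]
    refine Integrable.const_mul ?_ a
    have := (GaussianFourier.integrable_cexp_neg_mul_sq_norm_add (V := Vec d) (b := (b : ℂ))
      (by simpa using hb) 0 0).norm
    refine this.congr (.of_forall fun y => ?_)
    simp [Complex.norm_exp]
    left
    norm_cast
  | add p q hp hq =>
    simp only [ev_add, add_mul]
    exact (hp hb).add (hq hb)
  | mul_X p j hp =>
    have h2 : 0 < b / 2 := by positivity
    have key := (hp h2).mul_bdd (c := 1 + (b / 2)⁻¹)
      (g := fun y : Vec d => y j * Real.exp (-(b / 2) * ‖y‖ ^ 2))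
      (Continuous.aestronglyMeasurable (by fun_prop)) (.of_forall fun y => ?_)
    · refine key.congr (.of_forall fun y => ?_)
      have : Real.exp (-b * ‖y‖ ^ 2)
          = Real.exp (-(b / 2) * ‖y‖ ^ 2) * Real.exp (-(b / 2) * ‖y‖ ^ 2) := by
        rw [← Real.exp_add]; ring_nf
      simp only [ev_mul, ev_X, this]
      ring
    · rw [norm_mul, Real.norm_eq_abs (Real.exp _), abs_of_pos (Real.exp_pos _), neg_mul,
        Real.exp_neg, ← div_eq_mul_inv, div_le_iff₀ (Real.exp_pos _)]
      have h1 : ‖y j‖ ≤ ‖y‖ := PiLp.norm_apply_le y j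
      have h3 : b / 2 * ‖y‖ ^ 2 + 1 ≤ Real.exp (b / 2 * ‖y‖ ^ 2) := Real.add_one_le_exp _
      have h4 : (b / 2)⁻¹ * (b / 2 * ‖y‖ ^ 2) = ‖y‖ ^ 2 := by
        field_simp
      have h5 : 0 < (b / 2)⁻¹ := by positivity
      nlinarith [sq_nonneg (‖y‖ - 1), mul_le_mul_of_nonneg_left h3 h5.le,
        mul_nonneg h2.le (sq_nonneg ‖y‖)]

/-- The Gaussian integral `∫ P(y) exp(-|y|²/2) dy` of a polynomial. -/
def gaussL (P : MvPolynomial (Fin d) ℝ) : ℝ :=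
  ∫ y : Vec d, ev P y * Real.exp (-(1 / 2) * ‖y‖ ^ 2)

lemma gaussL_add (P R : MvPolynomial (Fin d) ℝ) : gaussL (P + R) = gaussL P + gaussL R := by
  unfold gaussL
  rw [← integral_add (integrable_ev_mul_gauss P (by norm_num))
    (integrable_ev_mul_gauss R (by norm_num))]
  simp [add_mul]

lemma gaussL_C_mul (c : ℝ) (P : MvPolynomial (Fin d) ℝ) :
    gaussL (C c * P) = c * gaussL P := by
  unfold gaussL
  rw [← integral_const_mul]
  simp [mul_assoc]

lemma gaussL_zero : gaussL (0 : MvPolynomial (Fin d) ℝ) = 0 := by simp [gaussL, ev]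

lemma gaussL_sum {ι : Type*} (s : Finset ι) (P : ι → MvPolynomial (Fin d) ℝ) :
    gaussL (∑ i ∈ s, P i) = ∑ i ∈ s, gaussL (P i) := by
  classical
  induction s using Finset.induction_on with
  | empty => simp [gaussL_zero]
  | insert a s ha ih => rw [Finset.sum_insert ha, Finset.sum_insert ha, gaussL_add, ih]

/-- Gaussian integration by parts. -/
lemma gaussL_X_mul (i : Fin d) (P : MvPolynomial (Fin d) ℝ) :
    gaussL (X i * P) = gaussL (pderiv i P) := by
  have hg (y : Vec d) : HasLineDerivAt ℝ (fun y : Vec d => Real.exp (-(1 / 2) * ‖y‖ ^ 2))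
      (-(y i) * Real.exp (-(1 / 2) * ‖y‖ ^ 2)) y (EuclideanSpace.single i 1) := by
    have h1 := (((hasStrictFDerivAt_norm_sq y).hasFDerivAt.const_mul (-(1 / 2) : ℝ)).exp).hasLineDerivAt
      (EuclideanSpace.single i (1 : ℝ))
    have h2 : -(y i) * Real.exp (-(1 / 2) * ‖y‖ ^ 2) =
        (Real.exp (-(1 / 2) * ‖y‖ ^ 2) • (-(1 / 2) : ℝ) • 2 • (innerSL ℝ) y)
          (EuclideanSpace.single i 1) := by
      simp [EuclideanSpace.inner_single_right]
      ring
    rw [h2]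
    exact h1
  have := integral_bilinear_hasLineDerivAt_right_eq_neg_left_of_integrable
    (μ := (volume : Measure (Vec d))) (B := ContinuousLinearMap.mul ℝ ℝ)
    (f := ev P) (f' := ev (pderiv i P)) (g := fun y : Vec d => Real.exp (-(1 / 2) * ‖y‖ ^ 2))
    (g' := fun y : Vec d => -(y i) * Real.exp (-(1 / 2) * ‖y‖ ^ 2))
    (v := EuclideanSpace.single i 1)
    (by simpa using integrable_ev_mul_gauss (pderiv i P) (b := 1 / 2) (by norm_num))
    (by
      have := (integrable_ev_mul_gauss (X i * P) (b := 1 / 2) (by norm_num)).neg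
      refine this.congr (.of_forall fun y => ?_)
      simp; ring)
    (by simpa using integrable_ev_mul_gauss P (b := 1 / 2) (by norm_num))
    (fun x _ => hasLineDerivAt_ev P i x) (fun x _ => hg x)
  simp only [ContinuousLinearMap.mul_apply'] at this
  unfold gaussL
  rw [← neg_inj, ← this, ← integral_neg]
  refine integral_congr_ae (.of_forall fun y => ?_)
  simp; ring

end gauss

/-! ### Gaussian moments of harmonic polynomials -/

section moments
variable {d : ℕ}

/-- The linear form `y ↦ ⟨x, y⟩` as a polynomial. -/
def ell (x : Vec d) : MvPolynomial (Fin d) ℝ := ∑ i, C (x i) * X i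

/-- The derivative of `P` in the direction `x`. -/
def dirD (x : Vec d) (P : MvPolynomial (Fin d) ℝ) : MvPolynomial (Fin d) ℝ :=
  ∑ i, C (x i) * pderiv i P

/-- Laplacian of a polynomial. -/
def lap (P : MvPolynomial (Fin d) ℝ) : MvPolynomial (Fin d) ℝ := ∑ i, pderiv i (pderiv i P)

lemma ev_ell (x y : Vec d) : ev (ell x) y = inner ℝ x y := by
  simp [ell, PiLp.inner_apply, mul_comm]

lemma isHomogeneous_ell (x : Vec d) : (ell x).IsHomogeneous 1 := by
  refine IsHomogeneous.sum _ _ _ fun i _ => ?_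
  simpa using (isHomogeneous_C (Fin d) (x i)).mul (isHomogeneous_X ℝ i)

lemma pderiv_ell (x : Vec d) (i : Fin d) : pderiv i (ell x) = C (x i) := by
  classical
  simp [ell, pderiv_X, Pi.single_apply]

lemma pderiv_comm (i j : Fin d) (P : MvPolynomial (Fin d) ℝ) :
    pderiv i (pderiv j P) = pderiv j (pderiv i P) := by
  have h : ⁅(pderiv i : Derivation ℝ (MvPolynomial (Fin d) ℝ) (MvPolynomial (Fin d) ℝ)),
      (pderiv j : Derivation ℝ (MvPolynomial (Fin d) ℝ) (MvPolynomial (Fin d) ℝ))⁆ = 0 := by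
    refine MvPolynomial.derivation_ext fun k => ?_
    classical
    simp [Derivation.commutator_apply, pderiv_X, Pi.single_apply, apply_ite]
  have := congrArg (fun D => D P) h
  simpa [Derivation.commutator_apply, sub_eq_zero] using this

lemma isHomogeneous_dirD {P : MvPolynomial (Fin d) ℝ} {n : ℕ} (hP : P.IsHomogeneous n)
    (x : Vec d) : (dirD x P).IsHomogeneous (n - 1) := by
  refine IsHomogeneous.sum _ _ _ fun i _ => ?_
  simpa using (isHomogeneous_C (Fin d) (x i)).mul hP.pderiv

lemma lap_dirD {P : MvPolynomial (Fin d) ℝ} (hP : lap P = 0) (x : Vec d) :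
    lap (dirD x P) = 0 := by
  have : lap (dirD x P) = dirD x (lap P) := by
    simp only [lap, dirD, map_sum, Derivation.leibniz, pderiv_C, smul_eq_mul, mul_zero, add_zero,
      Finset.mul_sum]
    rw [Finset.sum_comm]
    refine Finset.sum_congr rfl fun i _ => Finset.sum_congr rfl fun j _ => ?_
    rw [pderiv_comm j i P, pderiv_comm j i]
  rw [this, hP]
  simp [dirD]

lemma ev_dirD_self {P : MvPolynomial (Fin d) ℝ} {n : ℕ} (hP : P.IsHomogeneous n) (x : Vec d) :
    ev (dirD x P) x = n * ev P x := by
  have := congrArg (fun R => ev R x) hP.sum_X_mul_pderiv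
  simpa [dirD, nsmul_eq_mul, ev] using this

/-- Divergence theorem in Gaussian form: integrate `div (⟨x,y⟩^k ∇P)` against the Gaussian and use
Euler's identity. -/
lemma gaussL_mul_ell_pow {P : MvPolynomial (Fin d) ℝ} {n : ℕ} (hP : P.IsHomogeneous n)
    (hlap : lap P = 0) (x : Vec d) (k : ℕ) :
    n * gaussL (P * ell x ^ k) = k * gaussL (dirD x P * ell x ^ (k - 1)) := by
  have h1 : C (n : ℝ) * (P * ell x ^ k) = ∑ i, X i * (pderiv i P * ell x ^ k) := by
    simp only [← mul_assoc, ← Finset.sum_mul, hP.sum_X_mul_pderiv]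
    simp
  have h2 : ∑ i, pderiv i (pderiv i P * ell x ^ k)
      = C (k : ℝ) * (dirD x P * ell x ^ (k - 1)) := by
    simp only [Derivation.leibniz, Derivation.leibniz_pow, pderiv_ell, Finset.sum_add_distrib,
      smul_eq_mul, ← Finset.mul_sum, nsmul_eq_mul]
    change _ + ell x ^ k * lap P = _
    rw [hlap, mul_zero, add_zero]
    simp only [dirD, Finset.sum_mul, Finset.mul_sum]
    refine Finset.sum_congr rfl fun i _ => ?_
    simp
    ring
  rw [← gaussL_C_mul, h1, gaussL_sum, ← gaussL_C_mul, ← h2, gaussL_sum]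
  simp only [gaussL_X_mul]

/-- The moments `∫ ⟨x, y⟩^k exp(-|y|²/2) dy` for a unit vector `x`, given by their recursion; see
`gaussL_ell_pow`. -/
def mom (d : ℕ) : ℕ → ℝ
  | 0 => gaussL (1 : MvPolynomial (Fin d) ℝ)
  | 1 => 0
  | k + 2 => (k + 1) * mom d k

lemma gaussL_ell_succ (x : Vec d) (hx : ‖x‖ = 1) (k : ℕ) :
    gaussL (ell x ^ (k + 1)) = k * gaussL (ell x ^ (k - 1)) := by
  have h1 : ell x ^ (k + 1) = ∑ i, C (x i) * (X i * ell x ^ k) := by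
    simp only [← mul_assoc, ← Finset.sum_mul]
    rw [pow_succ, mul_comm]; rfl
  have h3 : ∑ i, x i * x i = 1 := by
    have := EuclideanSpace.real_norm_sq_eq x
    rw [hx] at this
    simpa [sq] using this.symm
  rw [h1, gaussL_sum]
  simp only [gaussL_C_mul, gaussL_X_mul, Derivation.leibniz_pow, pderiv_ell]
  have h2 (i : Fin d) : k • ell x ^ (k - 1) • (C (x i) : MvPolynomial (Fin d) ℝ)
      = C (x i) * (C (k : ℝ) * ell x ^ (k - 1)) := by
    simp; ring
  simp only [h2, gaussL_C_mul]
  simp only [← mul_assoc, ← Finset.sum_mul]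
  rw [h3]; ring

lemma gaussL_ell_pow (x : Vec d) (hx : ‖x‖ = 1) (k : ℕ) : gaussL (ell x ^ k) = mom d k := by
  induction k using Nat.strong_induction_on with
  | _ k ih =>
    match k with
    | 0 => simp [mom]
    | 1 => simpa [mom] using gaussL_ell_succ x hx 0
    | k + 2 =>
      rw [gaussL_ell_succ x hx (k + 1), mom, Nat.add_sub_cancel, ih k (by omega)]
      push_cast; ring

/-- Gaussian Funk–Hecke formula for powers: `gaussL_mul_ell_pow` lowers the degree of `P` and the
power of `⟨x, y⟩` simultaneously, down to a constant. -/
lemma gaussL_funkHecke (x : Vec d) (hx : ‖x‖ = 1) (n k : ℕ) (P : MvPolynomial (Fin d) ℝ)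
    (hP : P.IsHomogeneous n) (hlap : lap P = 0) :
    gaussL (P * ell x ^ k) = k.descFactorial n * mom d (k - n) * ev P x := by
  induction n generalizing k P with
  | zero =>
    rw [← totalDegree_zero_iff_isHomogeneous, totalDegree_eq_zero_iff_eq_C] at hP
    rw [hP, gaussL_C_mul, gaussL_ell_pow x hx]
    simp [mul_comm]
  | succ n ih =>
    have h := gaussL_mul_ell_pow hP hlap x k
    have hn : ((n + 1 : ℕ) : ℝ) ≠ 0 := by positivity
    apply mul_left_cancel₀ hn
    rw [h, ih (k - 1) _ (isHomogeneous_dirD hP x) (lap_dirD hlap x), ev_dirD_self hP]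
    rcases k with _ | k
    · simp
    · rw [Nat.succ_descFactorial_succ, Nat.add_sub_cancel, Nat.add_sub_add_right]
      push_cast; ring

end moments

/-! ### Polar coordinates and moments on the sphere -/

section polar
variable {d : ℕ}

/-- Integration in polar coordinates of a function that is a product on every ray. -/
lemma integral_polar (hd : 1 ≤ d) (f : Vec d → ℝ) (a : Metric.sphere (0 : Vec d) 1 → ℝ)
    (b : ℝ → ℝ) (h : ∀ (x : Metric.sphere (0 : Vec d) 1) (r : ℝ), 0 < r →
      f (r • (x : Vec d)) = a x * b r) :
    ∫ y, f y = (∫ x, a x ∂(sphereMeasure d)) * ∫ r in Ioi (0 : ℝ), r ^ (d - 1) * b r := by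
  have hdim : Module.finrank ℝ (Vec d) = d := by simp
  have : Nonempty (Fin d) := ⟨⟨0, hd⟩⟩
  set μ : Measure (Vec d) := volume
  calc
    ∫ y, f y = ∫ y : ({(0)}ᶜ : Set (Vec d)), f y ∂(μ.comap (↑)) := by
      rw [integral_subtype_comap (measurableSet_singleton _).compl f, restrict_compl_singleton]
    _ = ∫ z : Metric.sphere (0 : Vec d) 1 × Ioi (0 : ℝ), a z.1 * b z.2
          ∂μ.toSphere.prod (.volumeIoiPow (d - 1)) := by
      have := (μ.measurePreserving_homeomorphUnitSphereProd).integral_comp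
        (Homeomorph.measurableEmbedding _)
        (fun z : Metric.sphere (0 : Vec d) 1 × Ioi (0 : ℝ) => a z.1 * b z.2)
      rw [hdim] at this
      rw [← this]
      refine integral_congr_ae (.of_forall fun y => ?_)
      obtain ⟨y, hy⟩ := y
      have hy' : 0 < ‖y‖ := norm_pos_iff.2 hy
      have := h ((homeomorphUnitSphereProd (Vec d)) ⟨y, hy⟩).1 ‖y‖ hy'
      simp only [homeomorphUnitSphereProd_apply_fst_coe] at this
      rw [smul_smul, mul_inv_cancel₀ hy'.ne', one_smul] at this
      simpa using this
    _ = (∫ x, a x ∂μ.toSphere) * ∫ r : Ioi (0 : ℝ), b r ∂.volumeIoiPow (d - 1) :=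
      integral_prod_mul a (fun r : Ioi (0 : ℝ) => b r)
    _ = _ := by
      congr 1
      simp only [Measure.volumeIoiPow, ENNReal.ofReal]
      rw [integral_withDensity_eq_integral_smul,
        integral_subtype_comap measurableSet_Ioi fun a ↦ Real.toNNReal (a ^ (d - 1)) • b a,
        setIntegral_congr_fun measurableSet_Ioi fun x hx ↦ ?_]
      · rw [NNReal.smul_def, Real.coe_toNNReal _ (pow_nonneg hx.out.le _), smul_eq_mul]
      · exact (measurable_subtype_coe.pow_const _).real_toNNReal

/-- Integral of a polynomial over the unit sphere. -/
def sphL (P : MvPolynomial (Fin d) ℝ) : ℝ :=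
  ∫ x : Metric.sphere (0 : Vec d) 1, ev P x ∂(sphereMeasure d)

/-- The radial integrals `∫₀^∞ r^a exp(-r²/2) dr`. -/
def radI (a : ℕ) : ℝ := ∫ r in Ioi (0 : ℝ), r ^ a * Real.exp (-(1 / 2) * r ^ 2)

lemma radI_eq (a : ℕ) :
    radI a = (1 / 2 : ℝ) ^ (-((a : ℝ) + 1) / 2) * (1 / 2) * Real.Gamma (((a : ℝ) + 1) / 2) := by
  rw [← integral_rpow_mul_exp_neg_mul_rpow (p := 2) (by norm_num)
    (show (-1 : ℝ) < a by have : (0 : ℝ) ≤ a := by positivity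
                          linarith) (by norm_num : (0 : ℝ) < 1 / 2)]
  unfold radI
  norm_cast

lemma radI_pos (a : ℕ) : 0 < radI a := by
  rw [radI_eq]
  have := Real.Gamma_pos_of_pos (show 0 < ((a : ℝ) + 1) / 2 by positivity)
  positivity

lemma radI_add_two (a : ℕ) : radI (a + 2) = (a + 1) * radI a := by
  rw [radI_eq, radI_eq]
  push_cast
  have h1 : (a + 2 + 1 : ℝ) / 2 = (a + 1) / 2 + 1 := by ring
  have h2 : -(a + 2 + 1 : ℝ) / 2 = -(a + 1) / 2 - 1 := by ring
  rw [h1, h2, Real.Gamma_add_one (by positivity), Real.rpow_sub_one (by norm_num)]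
  ring

lemma gaussL_eq_sphL (hd : 1 ≤ d) {P : MvPolynomial (Fin d) ℝ} {n : ℕ} (hP : P.IsHomogeneous n) :
    gaussL P = sphL P * radI (n + d - 1) := by
  unfold gaussL
  rw [integral_polar hd _ (fun x => ev P x) (fun r => r ^ n * Real.exp (-(1 / 2) * r ^ 2))]
  · congr 1
    unfold radI
    refine setIntegral_congr_fun measurableSet_Ioi fun r _ => ?_
    rw [← mul_assoc, ← pow_add]
    congr 2
    omega
  · intro x r hr
    rw [ev_smul_of_isHomogeneous hP, norm_smul]
    simp [abs_of_pos hr]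
    ring

lemma ballL_eq_sphL (hd : 1 ≤ d) {P : MvPolynomial (Fin d) ℝ} {n : ℕ} (hP : P.IsHomogeneous n) :
    (n + d) * ∫ y in Metric.closedBall (0 : Vec d) 1, ev P y = sphL P := by
  rw [← integral_indicator measurableSet_closedBall,
    integral_polar hd _ (fun x => ev P x) (fun r => (Ioc 0 1).indicator (fun r => r ^ n) r)]
  · have : ∫ r in Ioi (0 : ℝ), r ^ (d - 1) * (Ioc 0 1).indicator (fun r => r ^ n) r
        = 1 / (n + d) := by
      have h1 : ∀ r : ℝ, r ^ (d - 1) * (Ioc 0 1).indicator (fun r => r ^ n) r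
          = (Ioc 0 1).indicator (fun r => r ^ (n + d - 1)) r := by
        intro r
        by_cases hr : r ∈ Ioc (0 : ℝ) 1
        · simp only [indicator_of_mem hr, ← pow_add]
          congr 1; omega
        · simp [indicator_of_notMem hr]
      simp only [h1]
      rw [setIntegral_indicator measurableSet_Ioc, inter_eq_right.2 Ioc_subset_Ioi_self,
        ← intervalIntegral.integral_of_le zero_le_one, integral_pow]
      have : n + d - 1 + 1 = n + d := by omega
      rw [this]
      have h2 : ((n + d - 1 : ℕ) : ℝ) + 1 = n + d := by exact_mod_cast this
      rw [h2, one_pow, zero_pow (by omega), sub_zero]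
    rw [this]
    change _ * (sphL P * _) = _
    have : (0 : ℝ) < n + d := by positivity
    field_simp
  · intro x r hr
    have hm : r • (x : Vec d) ∈ Metric.closedBall (0 : Vec d) 1 ↔ r ∈ Ioc (0 : ℝ) 1 := by
      simp [norm_smul, abs_of_pos hr, hr]
    by_cases h : r ∈ Ioc (0 : ℝ) 1
    · rw [indicator_of_mem (hm.2 h), indicator_of_mem h, ev_smul_of_isHomogeneous hP]
      ring
    · rw [indicator_of_notMem (fun h' => h (hm.1 h')), indicator_of_notMem h, mul_zero]

/-- Comparison of moments of a harmonic polynomial on the sphere with moments of a harmonic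
polynomial of one degree less on the ball. -/
lemma sphL_moment (hd : 2 ≤ d) {n : ℕ} {P R : MvPolynomial (Fin d) ℝ}
    (hP : P.IsHomogeneous (n + 1)) (hPl : lap P = 0) (hR : R.IsHomogeneous n) (hRl : lap R = 0)
    {x e : Vec d} (hx : ‖x‖ = 1) (he : ‖e‖ = 1) (hRe : ev R e = 1) (k : ℕ) :
    sphL (P * ell x ^ k) = ev P x *
      (k * ∫ y in Metric.closedBall (0 : Vec d) 1, ev (R * ell e ^ (k - 1)) y) := by
  have hhom (y : Vec d) (k : ℕ) : (ell y ^ k).IsHomogeneous k := by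
    simpa using (isHomogeneous_ell y).pow k
  have h1 := gaussL_eq_sphL (by omega) (hP.mul (hhom x k))
  rw [gaussL_funkHecke x hx _ k P hP hPl] at h1
  rcases k with _ | k
  · simp only [Nat.zero_descFactorial_succ, Nat.cast_zero, zero_mul, mul_zero] at h1 ⊢
    exact (mul_eq_zero.1 h1.symm).resolve_right (radI_pos _).ne'
  · rw [Nat.add_sub_cancel]
    have h2 := gaussL_eq_sphL (by omega) (hR.mul (hhom e k))
    rw [gaussL_funkHecke e he _ k R hR hRl, hRe] at h2
    have h3 := ballL_eq_sphL (by omega) (hR.mul (hhom e k))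
    rw [Nat.succ_descFactorial_succ, Nat.add_sub_add_right] at h1
    have h4 := radI_add_two (n + k + d - 1)
    rw [show n + k + d - 1 + 2 = n + 1 + (k + 1) + d - 1 by omega] at h4
    have h5 : ((n + k + d - 1 : ℕ) : ℝ) + 1 = ((n + k : ℕ) : ℝ) + d := by
      exact_mod_cast (show n + k + d - 1 + 1 = n + k + d by omega)
    rw [h5] at h4
    rw [h4] at h1
    rw [← h3] at h2
    have hI := (radI_pos (n + k + d - 1)).ne'
    have hnd : ((n + k : ℕ) : ℝ) + d ≠ 0 := by
      rw [← h5]; positivity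
    apply mul_right_cancel₀ (mul_ne_zero hnd hI)
    rw [← h1]
    push_cast at h2 ⊢
    linear_combination (↑k + 1) * ev P x * h2

lemma integrable_sphere {f : Metric.sphere (0 : Vec d) 1 → ℝ} (hf : Continuous f) :
    Integrable f (sphereMeasure d) := by
  have : IsFiniteMeasure (sphereMeasure d) := by unfold sphereMeasure; infer_instance
  exact hf.integrable_of_hasCompactSupport (HasCompactSupport.of_compactSpace f)

/-- Weak form of the Funk–Hecke formula, tested against the polynomial `g` of `⟨x, y⟩`. -/
lemma sphere_poly (hd : 2 ≤ d) {n : ℕ} {P R : MvPolynomial (Fin d) ℝ}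
    (hP : P.IsHomogeneous (n + 1)) (hPl : lap P = 0) (hR : R.IsHomogeneous n) (hRl : lap R = 0)
    {x e : Vec d} (hx : ‖x‖ = 1) (he : ‖e‖ = 1) (hRe : ev R e = 1) (g : Polynomial ℝ) :
    ∫ y : Metric.sphere (0 : Vec d) 1, ev P y * g.eval (inner ℝ x (y : Vec d)) ∂(sphereMeasure d)
      = ev P x * ∫ y in Metric.closedBall (0 : Vec d) 1,
          ev R y * g.derivative.eval (inner ℝ e y) := by
  have hc (h : Polynomial ℝ) : Continuous fun y : Metric.sphere (0 : Vec d) 1 =>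
      ev P y * h.eval (inner ℝ x (y : Vec d)) :=
    ((continuous_ev P).comp continuous_subtype_val).mul
      (h.continuous.comp (by fun_prop))
  have hc' (h : Polynomial ℝ) : IntegrableOn (fun y : Vec d =>
      ev R y * h.eval (inner ℝ e y)) (Metric.closedBall 0 1) :=
    ((continuous_ev R).mul (h.continuous.comp (by fun_prop))).continuousOn.integrableOn_compact
      (isCompact_closedBall _ _)
  induction g using Polynomial.induction_on' with
  | add p q hp hq =>
    simp only [Polynomial.eval_add, Polynomial.derivative_add, mul_add]
    rw [integral_add (integrable_sphere (hc p)) (integrable_sphere (hc q)),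
      integral_add (hc' _) (hc' _), hp, hq]
    ring
  | monomial k c =>
    have := sphL_moment hd hP hPl hR hRl hx he hRe k
    simp only [sphL, ev_mul, ev_pow, ev_ell] at this
    simp only [Polynomial.eval_monomial, Polynomial.derivative_monomial]
    have e1 (y : Vec d) : ev P y * (c * inner ℝ x y ^ k) = c * (ev P y * inner ℝ x y ^ k) := by ring
    have e2 (y : Vec d) : ev R y * (c * k * inner ℝ e y ^ (k - 1))
      = c * k * (ev R y * inner ℝ e y ^ (k - 1)) := by ring
    simp only [e1, e2]
    rw [integral_const_mul, integral_const_mul, this]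
    ring

end polar

/-! ### The model harmonic polynomial and its slices -/

section model
variable {e : ℕ}

/-- Real and imaginary parts of `(X₀ + i X₁)^m` as real polynomials. -/
def reIm (e : ℕ) : ℕ → MvPolynomial (Fin (e + 2)) ℝ × MvPolynomial (Fin (e + 2)) ℝ
  | 0 => (1, 0)
  | m + 1 => (X 0 * (reIm e m).1 - X 1 * (reIm e m).2, X 0 * (reIm e m).2 + X 1 * (reIm e m).1)

lemma reIm_isHomogeneous (m : ℕ) :
    (reIm e m).1.IsHomogeneous m ∧ (reIm e m).2.IsHomogeneous m := by
  induction m with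
  | zero => exact ⟨isHomogeneous_one _ _, isHomogeneous_zero _ _ _⟩
  | succ m ih =>
    rw [add_comm m 1]
    have h0 := isHomogeneous_X ℝ (0 : Fin (e + 2))
    have h1 := isHomogeneous_X ℝ (1 : Fin (e + 2))
    rw [add_comm 1 m]
    simp only [reIm]
    rw [add_comm m 1]
    exact ⟨(h0.mul ih.1).sub (h1.mul ih.2), (h0.mul ih.2).add (h1.mul ih.1)⟩

/-- Cauchy–Riemann equations for `(X₀ + i X₁)^m`. -/
lemma reIm_pderiv (m : ℕ) :
    pderiv 0 (reIm e m).1 = m * (reIm e (m - 1)).1 ∧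
    pderiv 0 (reIm e m).2 = m * (reIm e (m - 1)).2 ∧
    pderiv 1 (reIm e m).1 = -(m * (reIm e (m - 1)).2) ∧
    pderiv 1 (reIm e m).2 = m * (reIm e (m - 1)).1 ∧
    ∀ i : Fin e, pderiv i.succ.succ (reIm e m).1 = 0 ∧ pderiv i.succ.succ (reIm e m).2 = 0 := by
  induction m with
  | zero => simp [reIm]
  | succ m ih =>
    obtain ⟨h1, h2, h3, h4, h5⟩ := ih
    have hX (i j : Fin (e + 2)) (h : i ≠ j) : pderiv i (X j : MvPolynomial (Fin (e + 2)) ℝ) = 0 :=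
      pderiv_X_of_ne h.symm
    have n1 : (0 : Fin (e + 2)) ≠ 1 := by simp
    have n2 (i : Fin e) : i.succ.succ ≠ 0 := Fin.succ_ne_zero _
    have n3 (i : Fin e) : i.succ.succ ≠ 1 := by
      rw [← Fin.succ_zero_eq_one]
      exact fun h => Fin.succ_ne_zero _ (Fin.succ_injective _ h)
    have key : (m : MvPolynomial (Fin (e + 2)) ℝ) * (reIm e m).1
          = (m : MvPolynomial (Fin (e + 2)) ℝ) * (X 0 * (reIm e (m - 1)).1 - X 1 * (reIm e (m - 1)).2) ∧
        (m : MvPolynomial (Fin (e + 2)) ℝ) * (reIm e m).2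
          = (m : MvPolynomial (Fin (e + 2)) ℝ) * (X 0 * (reIm e (m - 1)).2 + X 1 * (reIm e (m - 1)).1) := by
      rcases m with _ | m
      · simp
      · simp [reIm]
    obtain ⟨k1, k2⟩ := key
    simp only [Nat.add_sub_cancel]
    refine ⟨?_, ?_, ?_, ?_, fun i => ⟨?_, ?_⟩⟩ <;>
      simp only [reIm, map_sub, map_add, Derivation.leibniz, smul_eq_mul, pderiv_X_self,
        hX _ _ n1, hX _ _ n1.symm, h1, h2, h3, h4, (h5 _).1, (h5 _).2, hX _ _ (n2 _),
        hX _ _ (n3 _), mul_zero, add_zero, sub_zero, Nat.cast_add, Nat.cast_one]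
    · linear_combination -k1
    · linear_combination -k2
    · linear_combination k2
    · linear_combination -k1

lemma reIm_lap (m : ℕ) : lap (reIm e m).1 = 0 := by
  obtain ⟨h1, h2, h3, h4, h5⟩ := reIm_pderiv (e := e) m
  obtain ⟨g1, g2, g3, g4, g5⟩ := reIm_pderiv (e := e) (m - 1)
  have hc (i : Fin (e + 2)) : pderiv i (m : MvPolynomial (Fin (e + 2)) ℝ) = 0 := by
    rw [← map_natCast C, pderiv_C]
  unfold lap
  rw [Fin.sum_univ_succ, Fin.sum_univ_succ, Fin.succ_zero_eq_one, h1, h3]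
  simp only [(h5 _).1, map_zero, Finset.sum_const_zero, map_neg, Derivation.leibniz, g1, g4, hc,
    smul_eq_mul]
  ring

lemma ev_reIm (m : ℕ) (y : Vec (e + 2)) :
    ev (reIm e m).1 y = (((y 0 : ℂ) + y 1 * Complex.I) ^ m).re ∧
    ev (reIm e m).2 y = (((y 0 : ℂ) + y 1 * Complex.I) ^ m).im := by
  induction m with
  | zero => simp [reIm, ev]
  | succ m ih =>
    rw [pow_succ']
    have hs (P R : MvPolynomial (Fin (e + 2)) ℝ) : ev (P - R) y = ev P y - ev R y := by simp [ev]
    simp only [reIm, hs, ev_add, ev_mul, ev_X, ih.1, ih.2, Complex.mul_re, Complex.mul_im]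
    simp

end model

section slicing
variable {N : ℕ}

/-- The point of `ℝ^{N+1}` with first coordinate `t` and remaining coordinates `z`. -/
def vcons (t : ℝ) (z : Vec N) : Vec (N + 1) := WithLp.toLp 2 (Fin.cons t z)

@[simp] lemma vcons_zero (t : ℝ) (z : Vec N) : vcons t z 0 = t := rfl
@[simp] lemma vcons_succ (t : ℝ) (z : Vec N) (i : Fin N) : vcons t z i.succ = z i := rfl

lemma norm_vcons_sq (t : ℝ) (z : Vec N) : ‖vcons t z‖ ^ 2 = t ^ 2 + ‖z‖ ^ 2 := by
  rw [EuclideanSpace.real_norm_sq_eq, EuclideanSpace.real_norm_sq_eq, Fin.sum_univ_succ]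
  simp

/-- `vcons` as a measurable equivalence. -/
def vconsEquiv (N : ℕ) : ℝ × Vec N ≃ᵐ Vec (N + 1) :=
  ((MeasurableEquiv.refl ℝ).prodCongr (MeasurableEquiv.toLp 2 (Fin N → ℝ)).symm).trans
    ((MeasurableEquiv.piFinSuccAbove (fun _ : Fin (N + 1) => ℝ) 0).symm.trans
      (MeasurableEquiv.toLp 2 (Fin (N + 1) → ℝ)))

lemma vconsEquiv_apply (p : ℝ × Vec N) : vconsEquiv N p = vcons p.1 p.2 := by
  simp [vconsEquiv, vcons, MeasurableEquiv.piFinSuccAbove]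
  rfl

lemma vconsEquiv_mp : MeasurePreserving (vconsEquiv N) := by
  have h1 : MeasurePreserving (Prod.map (id : ℝ → ℝ) (@WithLp.ofLp 2 (Fin N → ℝ))) :=
    (MeasurePreserving.id volume).prod (PiLp.volume_preserving_ofLp (Fin N))
  have h2 := (volume_preserving_piFinSuccAbove (fun _ : Fin (N + 1) => ℝ) 0).symm
  have h3 := PiLp.volume_preserving_toLp (Fin (N + 1))
  exact h3.comp (h2.comp h1)

lemma integral_slice {f : Vec (N + 1) → ℝ} (hf : Integrable f) :
    ∫ y, f y = ∫ t : ℝ, ∫ z : Vec N, f (vcons t z) := by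
  have h1 := (vconsEquiv_mp (N := N)).integral_comp (vconsEquiv N).measurableEmbedding f
  have h2 : Integrable (fun p : ℝ × Vec N => f (vconsEquiv N p)) :=
    ((vconsEquiv_mp (N := N)).integrable_comp_emb (vconsEquiv N).measurableEmbedding).2 hf
  rw [← h1, Measure.volume_eq_prod, integral_prod _ h2]
  simp only [vconsEquiv_apply]

end slicing

section disc
variable {e : ℕ}

/-- Integral of `Re (t + i z₀)^m` over the slice `{z : t² + |z|² ≤ 1}` of the unit ball. -/
def discD (e m : ℕ) (t : ℝ) : ℝ :=
  ∫ z in Metric.closedBall (0 : Vec (e + 1)) (Real.sqrt (1 - t ^ 2)),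
    (((t : ℂ) + z 0 * Complex.I) ^ m).re

/-- Integration over the unit ball by slices orthogonal to the first coordinate axis. -/
lemma ball_slice (m : ℕ) {h : ℝ → ℝ} (hh : Continuous h) :
    ∫ y in Metric.closedBall (0 : Vec (e + 2)) 1, ev (reIm e m).1 y * h (y 0)
      = ∫ t in Icc (-1 : ℝ) 1, h t * discD e m t := by
  rw [← integral_indicator measurableSet_closedBall, integral_slice, ← integral_indicator measurableSet_Icc]
  · refine integral_congr_ae (.of_forall fun t => ?_)
    simp only
    by_cases ht : t ∈ Icc (-1 : ℝ) 1
    · rw [indicator_of_mem ht, discD, ← integral_indicator measurableSet_closedBall,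
        ← integral_const_mul]
      refine integral_congr_ae (.of_forall fun z => ?_)
      simp only
      have h1 : 0 ≤ 1 - t ^ 2 := by nlinarith [ht.1, ht.2]
      have hiff : vcons t z ∈ Metric.closedBall (0 : Vec (e + 2)) 1 ↔
          z ∈ Metric.closedBall (0 : Vec (e + 1)) (Real.sqrt (1 - t ^ 2)) := by
        rw [mem_closedBall_zero_iff, mem_closedBall_zero_iff, Real.le_sqrt (norm_nonneg _) h1,
          ← sq_le_one_iff₀ (norm_nonneg _), norm_vcons_sq]
        constructor <;> intro <;> linarith
      by_cases hz : z ∈ Metric.closedBall (0 : Vec (e + 1)) (Real.sqrt (1 - t ^ 2))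
      · rw [indicator_of_mem (hiff.2 hz), indicator_of_mem hz, (ev_reIm m _).1]
        rw [vcons_zero, ← Fin.succ_zero_eq_one, vcons_succ]
        ring
      · rw [indicator_of_notMem (fun h => hz (hiff.1 h)), indicator_of_notMem hz, mul_zero]
    · rw [indicator_of_notMem ht]
      have : ∀ z : Vec (e + 1), vcons t z ∉ Metric.closedBall (0 : Vec (e + 2)) 1 := by
        intro z hz
        rw [mem_closedBall_zero_iff, ← sq_le_one_iff₀ (norm_nonneg _), norm_vcons_sq] at hz
        apply ht
        have := sq_nonneg ‖z‖
        exact abs_le.1 ((sq_le_one_iff_abs_le_one t).1 (by linarith))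
      simp [indicator_of_notMem (this _)]
  · rw [integrable_indicator_iff measurableSet_closedBall]
    exact ((continuous_ev _).mul (hh.comp (by fun_prop))).continuousOn.integrableOn_compact
      (isCompact_closedBall _ _)

/-- The weights `c_j` in the expansion of `discD` along the powers of `s ± iρ`, see `discD_eq`: they
come from writing `s + iρ z₀` as the combination of `s + iρ` and `s - iρ` with coefficients
`(1 ± z₀)/2` and expanding by the binomial theorem. -/
def coefC (e m j : ℕ) : ℝ :=
  m.choose j * ∫ z in Metric.closedBall (0 : Vec (e + 1)) 1,
    ((1 + z 0) / 2) ^ j * ((1 - z 0) / 2) ^ (m - j)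

lemma discD_eq (m : ℕ) {s ρ : ℝ} (hρ : 0 < ρ) (h : s ^ 2 + ρ ^ 2 = 1) :
    discD e m s = ρ ^ (e + 1) * ∑ j ∈ Finset.range (m + 1),
      coefC e m j * ((⟨s, ρ⟩ : ℂ) ^ j * (⟨s, -ρ⟩ : ℂ) ^ (m - j)).re := by
  have h1 : Real.sqrt (1 - s ^ 2) = ρ := by
    rw [← Real.sqrt_sq hρ.le]; congr 1; linarith
  unfold discD
  rw [h1]
  have h2 := Measure.setIntegral_comp_smul_of_pos (volume : Measure (Vec (e + 1)))
    (fun z : Vec (e + 1) => (((s : ℂ) + z 0 * Complex.I) ^ m).re) (Metric.closedBall 0 1) hρ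
  rw [smul_closedBall _ _ zero_le_one, smul_zero, Real.norm_of_nonneg hρ.le, mul_one] at h2
  have h3 : ∫ z in Metric.closedBall (0 : Vec (e + 1)) ρ, (((s : ℂ) + z 0 * Complex.I) ^ m).re
      = ρ ^ (e + 1) * ∫ z in Metric.closedBall (0 : Vec (e + 1)) 1,
        (((s : ℂ) + ((ρ * z 0 : ℝ) : ℂ) * Complex.I) ^ m).re := by
    simp only [PiLp.smul_apply, smul_eq_mul] at h2
    rw [h2, finrank_euclideanSpace, Fintype.card_fin, ← mul_assoc,
      mul_inv_cancel₀ (pow_ne_zero _ hρ.ne'), one_mul]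
  rw [h3]
  congr 1
  have h4 (z : Vec (e + 1)) : (((s : ℂ) + ((ρ * z 0 : ℝ) : ℂ) * Complex.I) ^ m).re
      = ∑ j ∈ Finset.range (m + 1), (m.choose j *
        ((⟨s, ρ⟩ : ℂ) ^ j * (⟨s, -ρ⟩ : ℂ) ^ (m - j)).re) *
        (((1 + z 0) / 2) ^ j * ((1 - z 0) / 2) ^ (m - j)) := by
    have e1 : (s : ℂ) + ((ρ * z 0 : ℝ) : ℂ) * Complex.I
        = (((1 + z 0) / 2 : ℝ) : ℂ) * ⟨s, ρ⟩ + (((1 - z 0) / 2 : ℝ) : ℂ) * ⟨s, -ρ⟩ := by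
      apply Complex.ext <;> simp <;> ring
    rw [e1, add_pow, Complex.re_sum]
    refine Finset.sum_congr rfl fun j _ => ?_
    rw [mul_pow, mul_pow, show ∀ a b c d k : ℂ, a * b * (c * d) * k = (a * c * k) * (b * d) by
      intros; ring]
    rw [← Complex.ofReal_pow, ← Complex.ofReal_pow, ← Complex.ofReal_natCast, ← Complex.ofReal_mul,
      ← Complex.ofReal_mul, Complex.re_ofReal_mul]
    ring
  simp only [h4]
  rw [integral_finsetSum]
  · refine Finset.sum_congr rfl fun j _ => ?_
    rw [integral_const_mul, coefC]
    ring
  · intro j _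
    exact (Continuous.continuousOn (by fun_prop)).integrableOn_compact (isCompact_closedBall _ _)

lemma coefC_pos {m j : ℕ} (hj : j ≤ m) : 0 < coefC e m j := by
  unfold coefC
  refine mul_pos (by exact_mod_cast Nat.choose_pos hj) ?_
  have hc : Continuous fun z : Vec (e + 1) =>
    ((1 + z 0) / 2) ^ j * ((1 - z 0) / 2) ^ (m - j) := by fun_prop
  have hb : ∀ z ∈ Metric.closedBall (0 : Vec (e + 1)) 1, |z 0| ≤ 1 := fun z hz =>
    (PiLp.norm_apply_le z 0).trans (mem_closedBall_zero_iff.1 hz)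
  rw [setIntegral_pos_iff_support_of_nonneg_ae]
  · refine lt_of_lt_of_le (Metric.measure_ball_pos volume (0 : Vec (e + 1)) one_pos)
      (measure_mono fun z hz => ⟨?_, Metric.ball_subset_closedBall hz⟩)
    have : |z 0| < 1 := (PiLp.norm_apply_le z 0).trans_lt (mem_ball_zero_iff.1 hz)
    rw [abs_lt] at this
    have h1 : 0 < (1 + z 0) / 2 := by linarith
    have h2 : 0 < (1 - z 0) / 2 := by linarith
    exact (mul_pos (pow_pos h1 _) (pow_pos h2 _)).ne'
  · filter_upwards [ae_restrict_mem measurableSet_closedBall] with z hz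
    have := abs_le.1 (hb z hz)
    have h1 : 0 ≤ (1 + z 0) / 2 := by linarith
    have h2 : 0 ≤ (1 - z 0) / 2 := by linarith
    exact mul_nonneg (pow_nonneg h1 _) (pow_nonneg h2 _)
  · exact hc.continuousOn.integrableOn_compact (isCompact_closedBall _ _)

lemma sum_coefC (m : ℕ) : ∑ j ∈ Finset.range (m + 1), coefC e m j
    = volume.real (Metric.closedBall (0 : Vec (e + 1)) 1) := by
  simp only [coefC, ← integral_const_mul]
  rw [← integral_finsetSum]
  · have : ∀ z : Vec (e + 1), ∑ j ∈ Finset.range (m + 1), (m.choose j : ℝ) *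
        (((1 + z 0) / 2) ^ j * ((1 - z 0) / 2) ^ (m - j)) = 1 := by
      intro z
      have := add_pow ((1 + z 0) / 2) ((1 - z 0) / 2) m
      rw [show (1 + z 0) / 2 + (1 - z 0) / 2 = 1 by ring, one_pow] at this
      exact Eq.trans (Finset.sum_congr rfl fun j _ => by ring) this.symm
    simp only [this]
    simp
  · intro j _
    exact (Continuous.continuousOn (by fun_prop)).integrableOn_compact (isCompact_closedBall _ _)

end disc

/-! ### Funk–Hecke formula for spherical caps -/

section cap
variable {e : ℕ}

lemma continuousOn_discD (m : ℕ) : ContinuousOn (discD e m) (Icc (-1) 1) := by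
  have hc : Continuous fun t : ℝ => Real.sqrt (1 - t ^ 2) ^ (e + 1) *
      ∑ j ∈ Finset.range (m + 1), coefC e m j *
        (((t : ℂ) + (Real.sqrt (1 - t ^ 2) : ℝ) * Complex.I) ^ j *
          ((t : ℂ) + ((-Real.sqrt (1 - t ^ 2) : ℝ) : ℂ) * Complex.I) ^ (m - j)).re := by
    fun_prop
  refine hc.continuousOn.congr fun t ht => ?_
  have h1 : 0 ≤ 1 - t ^ 2 := by nlinarith [ht.1, ht.2]
  rcases (Real.sqrt_nonneg (1 - t ^ 2)).eq_or_lt with h0 | h0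
  · simp only [discD, ← h0]
    simp [Measure.restrict_singleton]
  · rw [discD_eq m h0 (by rw [Real.sq_sqrt h1]; ring)]
    simp only [Complex.mk_eq_add_mul_I]

lemma exists_derivative_eq (k : Polynomial ℝ) : ∃ g : Polynomial ℝ, g.derivative = k := by
  induction k using Polynomial.induction_on' with
  | add p q hp hq =>
    obtain ⟨a, rfl⟩ := hp
    obtain ⟨b, rfl⟩ := hq
    exact ⟨a + b, Polynomial.derivative_add⟩
  | monomial n a =>
    refine ⟨Polynomial.monomial (n + 1) (a / (n + 1)), ?_⟩
    rw [Polynomial.derivative_monomial]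
    have : (n : ℝ) + 1 ≠ 0 := by positivity
    simp [this]

instance (d : ℕ) : IsFiniteMeasure (sphereMeasure d) := by
  unfold sphereMeasure; infer_instance

/-- Integral of `P` over the spherical cap `{y : ⟨x, y⟩ ≤ t}`. -/
def capI {d : ℕ} (P : MvPolynomial (Fin d) ℝ) (x : Vec d) (t : ℝ) : ℝ :=
  ∫ y : Metric.sphere (0 : Vec d) 1, ev P y * (if inner ℝ x (y : Vec d) ≤ t then 1 else 0)
    ∂(sphereMeasure d)

lemma integrable_cap_prod {d : ℕ} (P : MvPolynomial (Fin d) ℝ) (x : Vec d) {k : ℝ → ℝ}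
    (hk : Continuous k) :
    Integrable (fun p : ℝ × Metric.sphere (0 : Vec d) 1 =>
      k p.1 * (ev P p.2 * (if inner ℝ x (p.2 : Vec d) ≤ p.1 then 1 else 0)))
      ((volume.restrict (Icc (-1 : ℝ) 1)).prod (sphereMeasure d)) := by
  have h1 : Integrable k (volume.restrict (Icc (-1 : ℝ) 1)) :=
    hk.continuousOn.integrableOn_compact isCompact_Icc
  have h2 := h1.mul_prod (integrable_sphere (d := d) (f := fun y => ev P y)
    ((continuous_ev P).comp continuous_subtype_val))
  have hm : MeasurableSet {p : ℝ × Metric.sphere (0 : Vec d) 1 | inner ℝ x (p.2 : Vec d) ≤ p.1} :=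
    measurableSet_le (by fun_prop) (by fun_prop)
  refine (h2.indicator hm).congr (.of_forall fun p => ?_)
  by_cases h : inner ℝ x (p.2 : Vec d) ≤ p.1
  · rw [indicator_of_mem (by exact h)]; simp [h]
  · rw [indicator_of_notMem (by exact h)]; simp [h]

/-- The moments in `t` of the cap integrals: Fubini and the fundamental theorem of calculus turn
`sphere_poly`, applied to a primitive of `k`, into this identity. -/
lemma capI_moment (m : ℕ) {P : MvPolynomial (Fin (e + 2)) ℝ} (hP : P.IsHomogeneous (m + 1))
    (hPl : lap P = 0) {x : Vec (e + 2)} (hx : ‖x‖ = 1) (k : Polynomial ℝ) :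
    ∫ t in Icc (-1 : ℝ) 1, k.eval t * capI P x t
      = - (ev P x * ∫ t in Icc (-1 : ℝ) 1, k.eval t * discD e m t) := by
  obtain ⟨g, rfl⟩ := exists_derivative_eq k
  set E : Vec (e + 2) := EuclideanSpace.single 0 1
  have hE : ‖E‖ = 1 := by simp [E]
  have hRe : ev (reIm e m).1 E = 1 := by
    rw [(ev_reIm m E).1]; simp [E]
  have hin (y : Vec (e + 2)) : inner ℝ E y = y 0 := by
    simp [E, EuclideanSpace.inner_single_left]
  have hpoly := fun g => sphere_poly (by omega) hP hPl (reIm_isHomogeneous m).1 (reIm_lap m) hx hE hRe g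
  simp only [hin] at hpoly
  have h0 : ∫ y : Metric.sphere (0 : Vec (e + 2)) 1, ev P y ∂(sphereMeasure (e + 2)) = 0 := by
    simpa using hpoly 1
  have hg := hpoly g
  rw [ball_slice m (h := fun t => g.derivative.eval t) (Polynomial.continuous _)] at hg
  rw [← hg]
  simp only [capI, ← integral_const_mul]
  rw [integral_integral_swap (integrable_cap_prod P x (Polynomial.continuous _))]
  have h1 (y : Metric.sphere (0 : Vec (e + 2)) 1) :
      ∫ t in Icc (-1 : ℝ) 1, g.derivative.eval t *
        (ev P y * (if inner ℝ x (y : Vec (e + 2)) ≤ t then 1 else 0))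
      = g.eval 1 * ev P y - ev P y * g.eval (inner ℝ x (y : Vec (e + 2))) := by
    set u : ℝ := inner ℝ x (y : Vec (e + 2)) with hu
    have hab : |u| ≤ 1 := by
      refine (abs_real_inner_le_norm x y).trans ?_
      rw [hx, mem_sphere_zero_iff_norm.1 y.2, one_mul]
    obtain ⟨ha, hb⟩ := abs_le.1 hab
    have h2 (t : ℝ) : g.derivative.eval t * (ev P y * (if u ≤ t then 1 else 0))
        = ev P y * (Ici u).indicator (fun t => g.derivative.eval t) t := by
      by_cases h : u ≤ t
      · rw [indicator_of_mem (by exact h)]; simp [h, mul_comm]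
      · rw [indicator_of_notMem (by exact h)]; simp [h]
    simp only [h2]
    rw [integral_const_mul, setIntegral_indicator measurableSet_Ici]
    have h3 : Icc (-1 : ℝ) 1 ∩ Ici u = Icc u 1 := by
      ext t; simp only [mem_inter_iff, mem_Icc, mem_Ici]
      constructor
      · rintro ⟨⟨_, h⟩, h'⟩; exact ⟨h', h⟩
      · rintro ⟨h, h'⟩; exact ⟨⟨by linarith, h'⟩, h⟩
    rw [h3, integral_Icc_eq_integral_Ioc, ← intervalIntegral.integral_of_le hb,
      intervalIntegral.integral_eq_sub_of_hasDerivAt (f := fun t => g.eval t)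
        (fun t _ => g.hasDerivAt t) ((Polynomial.continuous _).intervalIntegrable _ _)]
    ring
  simp only [h1]
  rw [integral_sub, integral_const_mul, h0]
  · ring
  · exact integrable_sphere (continuous_const.mul ((continuous_ev P).comp continuous_subtype_val))
  · exact integrable_sphere (((continuous_ev P).comp continuous_subtype_val).mul
      (g.continuous.comp (by fun_prop)))

lemma capI_tendsto {d : ℕ} (P : MvPolynomial (Fin d) ℝ) (x : Vec d) (s : ℝ) :
    Filter.Tendsto (capI P x) (nhdsWithin s (Ioi s)) (nhds (capI P x s)) := by
  have hP : Integrable (fun y : Metric.sphere (0 : Vec d) 1 => ev P y) (sphereMeasure d) :=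
    integrable_sphere ((continuous_ev P).comp continuous_subtype_val)
  refine tendsto_integral_filter_of_dominated_convergence (fun y => ‖ev P y‖)
    (.of_forall fun t => ?_) (.of_forall fun t => .of_forall fun y => ?_) hP.norm
    (.of_forall fun y => ?_)
  · refine hP.aestronglyMeasurable.mul (Measurable.aestronglyMeasurable ?_)
    exact Measurable.ite (measurableSet_le (by fun_prop) (by fun_prop)) measurable_const
      measurable_const
  · rw [norm_mul]
    refine mul_le_of_le_one_right (norm_nonneg _) ?_
    split_ifs <;> simp
  · refine tendsto_const_nhds.congr' ?_
    by_cases h : inner ℝ x (y : Vec d) ≤ s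
    · filter_upwards [self_mem_nhdsWithin] with t ht
      have : inner ℝ x (y : Vec d) ≤ t := h.trans (le_of_lt ht)
      simp [h, this]
    · filter_upwards [mem_nhdsWithin_of_mem_nhds (Iio_mem_nhds (not_le.1 h))] with t ht
      have : ¬ inner ℝ x (y : Vec d) ≤ t := not_le.2 ht
      simp [h, this]

/-- Funk–Hecke formula for the indicator of a cap. Both sides have the same moments against all
polynomials in `s`, hence agree almost everywhere, hence everywhere by one-sided continuity. -/
lemma capI_eq (m : ℕ) {P : MvPolynomial (Fin (e + 2)) ℝ} (hP : P.IsHomogeneous (m + 1))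
    (hPl : lap P = 0) {x : Vec (e + 2)} (hx : ‖x‖ = 1) {s : ℝ} (hs : s ∈ Ioo (-1 : ℝ) 1) :
    capI P x s = - (ev P x * discD e m s) := by
  set Φ : ℝ → ℝ := fun t => capI P x t + ev P x * discD e m t with hΦ
  have hD : IntegrableOn (discD e m) (Icc (-1) 1) :=
    (continuousOn_discD m).integrableOn_compact isCompact_Icc
  have hF : IntegrableOn (capI P x) (Icc (-1) 1) := by
    have := (integrable_cap_prod P x (k := fun _ => 1) continuous_const).integral_prod_left
    simp only [one_mul] at this
    exact this
  have hΦi : IntegrableOn Φ (Icc (-1) 1) := hF.add (hD.const_mul _)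
  have hpoly (k : Polynomial ℝ) : ∫ t in Icc (-1 : ℝ) 1, k.eval t * Φ t = 0 := by
    simp only [hΦ, mul_add]
    rw [integral_add, capI_moment m hP hPl hx k]
    · simp only [mul_left_comm _ (ev P x)]
      rw [integral_const_mul]; ring
    · exact hF.continuousOn_mul k.continuous.continuousOn isCompact_Icc
    · exact IntegrableOn.continuousOn_mul k.continuous.continuousOn (hD.const_mul _) isCompact_Icc
  have hcont (k : ℝ → ℝ) (hk : Continuous k) : ∫ t in Icc (-1 : ℝ) 1, k t * Φ t = 0 := by
    by_contra hne
    set I := ∫ t in Icc (-1 : ℝ) 1, |Φ t|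
    have hI : 0 ≤ I := integral_nonneg fun t => abs_nonneg _
    have hpos := abs_pos.2 hne
    obtain ⟨p, hp⟩ := exists_polynomial_near_of_continuousOn (-1) 1 k hk.continuousOn
      (|∫ t in Icc (-1 : ℝ) 1, k t * Φ t| / (I + 1)) (by positivity)
    have hk' := hΦi.continuousOn_mul hk.continuousOn isCompact_Icc
    have hp' := hΦi.continuousOn_mul (K := Icc (-1) 1) (g := fun t => p.eval t)
      p.continuous.continuousOn isCompact_Icc
    have h1 : ∫ t in Icc (-1 : ℝ) 1, k t * Φ t
        = ∫ t in Icc (-1 : ℝ) 1, (k t * Φ t - p.eval t * Φ t) := by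
      rw [integral_sub hk' hp', hpoly, sub_zero]
    have h2 : |∫ t in Icc (-1 : ℝ) 1, k t * Φ t|
        ≤ |∫ t in Icc (-1 : ℝ) 1, k t * Φ t| / (I + 1) * I := by
      conv_lhs => rw [h1]
      refine abs_integral_le_integral_abs.trans ?_
      rw [← integral_const_mul]
      refine setIntegral_mono_on (hk'.sub hp').abs (hΦi.abs.const_mul _) measurableSet_Icc
        fun t ht => ?_
      rw [← sub_mul, abs_mul, abs_sub_comm]
      exact mul_le_mul_of_nonneg_right (hp t ht).le (abs_nonneg _)
    have h3 : |∫ t in Icc (-1 : ℝ) 1, k t * Φ t| / (I + 1) * (I + 1)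
      = |∫ t in Icc (-1 : ℝ) 1, k t * Φ t| := by field_simp
    have h4 : 0 < |∫ t in Icc (-1 : ℝ) 1, k t * Φ t| / (I + 1) := by positivity
    nlinarith
  have hae : ∀ᵐ t, t ∈ Ioo (-1 : ℝ) 1 → Φ t = 0 := by
    refine isOpen_Ioo.ae_eq_zero_of_integral_contDiff_smul_eq_zero
      (hΦi.mono_set Ioo_subset_Icc_self).locallyIntegrableOn fun g hg _ hgU => ?_
    rw [← hcont g hg.continuous, ← integral_indicator measurableSet_Icc]
    refine integral_congr_ae (.of_forall fun t => ?_)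
    simp only [smul_eq_mul]
    by_cases ht : t ∈ Icc (-1 : ℝ) 1
    · rw [indicator_of_mem ht]
    · rw [indicator_of_notMem ht,
        image_eq_zero_of_notMem_tsupport fun h => ht (Ioo_subset_Icc_self (hgU h)), zero_mul]
  have hlim : Filter.Tendsto Φ (nhdsWithin s (Ioi s)) (nhds (Φ s)) := by
    refine (capI_tendsto P x s).add (Filter.Tendsto.const_mul _ ?_)
    exact ((continuousOn_discD m).continuousAt (Icc_mem_nhds hs.1 hs.2)).tendsto.mono_left
      nhdsWithin_le_nhds
  have hfr : ∃ᶠ t in nhdsWithin s (Ioi s), Φ t = 0 := by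
    rw [Filter.frequently_iff]
    intro U hU
    obtain ⟨u, hu, huU⟩ := (mem_nhdsGT_iff_exists_Ioo_subset' hs.2).1 hU
    have hpos : 0 < volume (Ioo s (min u 1)) := by
      simp [hs.2, mem_Ioi.1 hu]
    by_contra hno
    push Not at hno
    refine hpos.ne' (measure_mono_null (fun t ht => ?_) hae)
    simp only [mem_compl_iff, mem_ofPred_eq]
    intro h
    exact hno t (huU ⟨ht.1, ht.2.trans_le (min_le_left _ _)⟩)
      (h ⟨hs.1.trans ht.1, ht.2.trans_le (min_le_right _ _)⟩)
  have := tendsto_nhds_unique_of_frequently_eq hlim tendsto_const_nhds hfr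
  simp only [hΦ] at this
  linarith

end cap

/-! ### The coefficients `γ_k` -/

section gamma
variable {e : ℕ}

lemma conv_ball_comp {d : ℕ} (L : Vec d ≃ₗᵢ[ℝ] Vec d) (a b : ℝ) (x : Vec d) :
    conv (ind (Metric.closedBall 0 a)) (ind (Metric.closedBall 0 b)) (L x)
      = conv (ind (Metric.closedBall 0 a)) (ind (Metric.closedBall 0 b)) x := by
  have hi (c : ℝ) (y : Vec d) : ind (Metric.closedBall 0 c) (L y) = ind (Metric.closedBall 0 c) y := by
    simp [ind, Set.indicator]
  unfold conv
  rw [← L.measurePreserving.integral_comp L.toHomeomorph.measurableEmbedding]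
  refine integral_congr_ae (.of_forall fun y => ?_)
  simp only
  rw [hi, ← map_sub, hi]

lemma conv_ball_radial {d : ℕ} {a b : ℝ} {x y : Vec d} (h : ‖x‖ = ‖y‖) :
    conv (ind (Metric.closedBall 0 a)) (ind (Metric.closedBall 0 b)) x
      = conv (ind (Metric.closedBall 0 a)) (ind (Metric.closedBall 0 b)) y := by
  rw [← Submodule.reflection_sub h, conv_ball_comp]

/-- Up to the volume of the unit ball, the volume of the slice at height `s` of the ball of radius
`c` in `ℝ^{e+2}`. -/
def chord (e : ℕ) (c s : ℝ) : ℝ := Real.sqrt (c ^ 2 - s ^ 2) ^ (e + 1)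

lemma continuous_chord (c : ℝ) : Continuous (chord e c) := by unfold chord; fun_prop

lemma integrable_chord {c : ℝ} (hc : 0 < c) : Integrable (chord e c) := by
  refine (continuous_chord c).integrable_of_hasCompactSupport
    (HasCompactSupport.intro (isCompact_Icc (a := -c) (b := c)) fun s hs => ?_)
  have : c ^ 2 - s ^ 2 ≤ 0 := by
    have : c < |s| := by
      by_contra h
      exact hs (abs_le.1 (not_lt.1 h))
    have := sq_lt_sq' (by linarith) this
    rw [sq_abs] at this; linarith
  simp [chord, Real.sqrt_eq_zero_of_nonpos this]

lemma slice_volume (q : ℝ) :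
    ∫ z : Vec (e + 1), ({z | ‖z‖ ^ 2 ≤ q} : Set (Vec (e + 1))).indicator 1 z
      = volume.real (Metric.closedBall (0 : Vec (e + 1)) 1) * Real.sqrt q ^ (e + 1) := by
  rcases lt_or_ge q 0 with hq | hq
  · have : ({z | ‖z‖ ^ 2 ≤ q} : Set (Vec (e + 1))) = ∅ := by
      ext z; simp only [mem_ofPred_eq, mem_empty_iff_false, iff_false, not_le]
      exact hq.trans_le (sq_nonneg _)
    simp [this, Real.sqrt_eq_zero_of_nonpos hq.le]
  · have : ({z | ‖z‖ ^ 2 ≤ q} : Set (Vec (e + 1))) = Metric.closedBall 0 (Real.sqrt q) := by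
      ext z; simp [Real.le_sqrt (norm_nonneg _) hq]
    rw [this, integral_indicator_one measurableSet_closedBall,
      Measure.addHaar_real_closedBall' _ _ (Real.sqrt_nonneg _), finrank_euclideanSpace,
      Fintype.card_fin, mul_comm]

/-- The intersection of `B_a` with the ball of radius `b` about `t e₀`, measured by slices orthogonal
to `e₀`: the two spheres meet at height `(t² + a² - b²) / (2t)`, below which the slices are those of
the second ball and above which those of the first. -/
lemma conv_ball_eq {a b t : ℝ} (ha : 0 < a) (hb : 0 < b) (ht : 0 < t) :
    conv (ind (Metric.closedBall (0 : Vec (e + 2)) a)) (ind (Metric.closedBall 0 b))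
        (t • EuclideanSpace.single 0 1)
      = volume.real (Metric.closedBall (0 : Vec (e + 1)) 1) *
        ((∫ s in Iic ((t ^ 2 + a ^ 2 - b ^ 2) / (2 * t) - t), chord e b s)
          + ∫ s in Ioi ((t ^ 2 + a ^ 2 - b ^ 2) / (2 * t)), chord e a s) := by
  set U := (t ^ 2 + a ^ 2 - b ^ 2) / (2 * t) with hU
  set E : Vec (e + 2) := EuclideanSpace.single 0 1
  have hU' : 2 * t * U = t ^ 2 + a ^ 2 - b ^ 2 := by rw [hU]; field_simp
  have hsub (u : ℝ) (z : Vec (e + 1)) : t • E - vcons u z = vcons (t - u) (-z) := by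
    ext i
    refine Fin.cases ?_ (fun i => ?_) i
    · simp [E]
    · simp [E]
  unfold conv
  rw [integral_slice]
  · have h1 (u : ℝ) : ∫ z : Vec (e + 1), ind (Metric.closedBall 0 a) (vcons u z) *
        ind (Metric.closedBall 0 b) (t • E - vcons u z)
        = volume.real (Metric.closedBall (0 : Vec (e + 1)) 1) *
          ((Iic U).indicator (fun u => chord e b (u - t)) u
            + (Ioi U).indicator (fun u => chord e a u) u) := by
      have hm (z : Vec (e + 1)) : ind (Metric.closedBall 0 a) (vcons u z) *
          ind (Metric.closedBall 0 b) (t • E - vcons u z)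
          = ({z | ‖z‖ ^ 2 ≤ min (a ^ 2 - u ^ 2) (b ^ 2 - (u - t) ^ 2)} :
              Set (Vec (e + 1))).indicator 1 z := by
        rw [hsub]
        have k1 : vcons u z ∈ Metric.closedBall (0 : Vec (e + 2)) a ↔ ‖z‖ ^ 2 ≤ a ^ 2 - u ^ 2 := by
          rw [mem_closedBall_zero_iff, ← sq_le_sq₀ (norm_nonneg _) ha.le, norm_vcons_sq]
          constructor <;> intro <;> linarith
        have k2 : vcons (t - u) (-z) ∈ Metric.closedBall (0 : Vec (e + 2)) b ↔
            ‖z‖ ^ 2 ≤ b ^ 2 - (u - t) ^ 2 := by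
          rw [mem_closedBall_zero_iff, ← sq_le_sq₀ (norm_nonneg _) hb.le, norm_vcons_sq, norm_neg]
          constructor <;> intro <;> linarith
        simp only [ind, Set.indicator, k1, k2, mem_ofPred_eq, le_min_iff]
        by_cases c1 : ‖z‖ ^ 2 ≤ a ^ 2 - u ^ 2 <;> by_cases c2 : ‖z‖ ^ 2 ≤ b ^ 2 - (u - t) ^ 2 <;>
          simp [c1, c2]
      simp only [hm]
      rw [slice_volume]
      congr 1
      by_cases hu : u ≤ U
      · rw [indicator_of_mem (by exact hu), indicator_of_notMem (by simpa using hu), add_zero,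
          min_eq_right, chord]
        nlinarith
      · rw [indicator_of_notMem (by simpa using hu), indicator_of_mem (by simpa using hu), zero_add,
          min_eq_left, chord]
        nlinarith
    simp only [h1]
    rw [integral_const_mul]
    congr 1
    have i1 : Integrable fun u => chord e b (u - t) := (integrable_chord hb).comp_sub_right t
    rw [integral_add (i1.indicator measurableSet_Iic)
      ((integrable_chord ha).indicator measurableSet_Ioi), integral_indicator measurableSet_Ioi]
    congr 1
    rw [← integral_indicator (measurableSet_Iic (a := U - t)),
      ← integral_sub_right_eq_self ((Iic (U - t)).indicator (chord e b)) t]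
    refine integral_congr_ae (.of_forall fun u => ?_)
    simp [Set.indicator]
  · have hm : MeasurableSet (Metric.closedBall (0 : Vec (e + 2)) a ∩
        (fun y => t • E - y) ⁻¹' Metric.closedBall 0 b) :=
      measurableSet_closedBall.inter (measurableSet_closedBall.preimage (by fun_prop))
    have hballs : IntegrableOn (fun _ : Vec (e + 2) => (1 : ℝ))
        (Metric.closedBall (0 : Vec (e + 2)) a ∩ (fun y => t • E - y) ⁻¹' Metric.closedBall 0 b) :=
      (continuousOn_const.integrableOn_compact (isCompact_closedBall _ _)).mono_set
        inter_subset_left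
    refine ((integrable_indicator_iff hm).2 hballs).congr (.of_forall fun y => ?_)
    simp only [ind, Set.indicator, mem_inter_iff, mem_preimage]
    by_cases c1 : y ∈ Metric.closedBall (0 : Vec (e + 2)) a <;>
      by_cases c2 : t • E - y ∈ Metric.closedBall (0 : Vec (e + 2)) b <;> simp [c1, c2]

/-- The contributions of the moving height cancel, as both balls have the same slice there. -/
lemma hasDerivAt_conv_ball {a b t : ℝ} (ha : 0 < a) (hb : 0 < b) (ht : 0 < t) :
    HasDerivAt (fun t : ℝ => conv (ind (Metric.closedBall (0 : Vec (e + 2)) a))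
        (ind (Metric.closedBall 0 b)) (t • EuclideanSpace.single 0 1))
      (-(volume.real (Metric.closedBall (0 : Vec (e + 1)) 1) *
        chord e a ((t ^ 2 + a ^ 2 - b ^ 2) / (2 * t)))) t := by
  set v := volume.real (Metric.closedBall (0 : Vec (e + 1)) 1)
  set u : ℝ → ℝ := fun t => (t ^ 2 + a ^ 2 - b ^ 2) / (2 * t) with hu
  obtain ⟨u', hu'⟩ : ∃ u', HasDerivAt u u' t := by
    have : DifferentiableAt ℝ u t := by
      rw [hu]
      refine DifferentiableAt.fun_div (by fun_prop) (by fun_prop) (by positivity)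
    exact ⟨_, this.hasDerivAt⟩
  have hI {c : ℝ} (hc : 0 < c) (x : ℝ) :
      HasDerivAt (fun x => ∫ s in Iic x, chord e c s) (chord e c x) x := by
    have h1 : HasDerivAt (fun x => (∫ s in Iic 0, chord e c s) + ∫ s in (0 : ℝ)..x, chord e c s)
        (chord e c x) x :=
      (((continuous_chord c).integral_hasStrictDerivAt 0 x).hasDerivAt).const_add _
    refine h1.congr_of_eventuallyEq (.of_forall fun y => ?_)
    simp only
    rw [← intervalIntegral.integral_Iic_sub_Iic (integrable_chord hc).integrableOn
      (integrable_chord hc).integrableOn]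
    ring
  have h2 : HasDerivAt (fun t => v * ((∫ s in Iic (u t - t), chord e b s)
      + ((∫ s, chord e a s) - ∫ s in Iic (u t), chord e a s)))
      (v * (chord e b (u t - t) * (u' - 1) + (0 - chord e a (u t) * u'))) t := by
    have k1 := (hI hb (u t - t)).comp (h := fun t => u t - t) t (hu'.fun_sub (hasDerivAt_id' t))
    have k2 := (hI ha (u t)).comp t hu'
    exact (k1.fun_add ((hasDerivAt_const t _).fun_sub k2)).const_mul v
  have hU' : 2 * t * u t = t ^ 2 + a ^ 2 - b ^ 2 := by simp only [hu]; field_simp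
  have h3 : chord e b (u t - t) = chord e a (u t) := by
    unfold chord
    congr 2
    linarith
  rw [h3, show v * (chord e a (u t) * (u' - 1) + (0 - chord e a (u t) * u'))
    = -(v * chord e a (u t)) by ring] at h2
  refine h2.congr_of_eventuallyEq ?_
  filter_upwards [Ioi_mem_nhds ht] with τ hτ
  rw [conv_ball_eq ha hb hτ]
  congr 2
  rw [← intervalIntegral.integral_Iic_add_Ioi (b := u τ) (integrable_chord ha).integrableOn
    (integrable_chord ha).integrableOn]
  ring

lemma norm_fderiv_conv_ball {a b t : ℝ} (ha : 0 < a) (hb : 0 < b) (ht : 0 < t) :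
    ‖fderiv ℝ (conv (ind (Metric.closedBall (0 : Vec (e + 2)) a)) (ind (Metric.closedBall 0 b)))
        (t • EuclideanSpace.single 0 1)‖
      = volume.real (Metric.closedBall (0 : Vec (e + 1)) 1) *
        chord e a ((t ^ 2 + a ^ 2 - b ^ 2) / (2 * t)) := by
  set E : Vec (e + 2) := EuclideanSpace.single 0 1 with hE
  have hn : ‖t • E‖ = t := by simp [E, norm_smul, abs_of_pos ht]
  have h0 : t • E ≠ 0 := by rw [← norm_pos_iff, hn]; exact ht
  have hdn : DifferentiableAt ℝ (fun x : Vec (e + 2) => ‖x‖) (t • E) :=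
    (contDiffAt_norm (n := 1) ℝ h0).differentiableAt (by simp)
  have hd := hasDerivAt_conv_ball (e := e) ha hb ht
  rw [← hn] at hd
  have hcomp := hd.comp_hasFDerivAt (t • E) hdn.hasFDerivAt
  have hfun : ((fun t : ℝ => conv (ind (Metric.closedBall (0 : Vec (e + 2)) a))
        (ind (Metric.closedBall 0 b)) (t • EuclideanSpace.single 0 1)) ∘ fun x => ‖x‖)
      = conv (ind (Metric.closedBall (0 : Vec (e + 2)) a)) (ind (Metric.closedBall 0 b)) := by
    funext x
    exact conv_ball_radial (by simp [norm_smul])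
  rw [hfun] at hcomp
  rw [hcomp.fderiv, norm_smul, norm_fderiv_norm hdn, mul_one, hn, norm_neg,
    Real.norm_of_nonneg]
  exact mul_nonneg measureReal_nonneg (pow_nonneg (Real.sqrt_nonneg _) _)

/-- The value of `γ_k`, where `hT2` says that `T` is twice the area of the triangle with sides `r`. -/
lemma gammaCoef_eq {r : Fin 3 → ℝ} (hr : ∀ j, 0 < r j) {T : ℝ} (hT : 0 < T) (k : Fin 3)
    (hT2 : 4 * T ^ 2 = 4 * r k ^ 2 * r (k + 1) ^ 2
      - (r k ^ 2 + r (k + 1) ^ 2 - r (k + 2) ^ 2) ^ 2) :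
    gammaCoef (e + 2) r k
      = volume.real (Metric.closedBall (0 : Vec (e + 1)) 1) * (T / r k) ^ (e + 1) := by
  have h := norm_fderiv_conv_ball (e := e) (hr (k + 1)) (hr (k + 2)) (hr k)
  have hk := hr k
  have : chord e (r (k + 1)) ((r k ^ 2 + r (k + 1) ^ 2 - r (k + 2) ^ 2) / (2 * r k))
      = (T / r k) ^ (e + 1) := by
    unfold chord
    congr 1
    rw [← Real.sqrt_sq (show 0 ≤ T / r k by positivity)]
    congr 1
    field_simp
    linarith
  rw [this] at h
  rw [← h, gammaCoef, dif_neg (by omega)]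
  rfl

end gamma

/-! ### The quadratic form and the spectral gap -/

section quadratic
open ComplexConjugate

/-- A continuous, positive definite function on `ℝ³` that is homogeneous of degree two is bounded
below by a positive multiple of the squared norm. -/
lemma exists_coercive {q : Vec 3 → ℝ} (hq : Continuous q) (hs : ∀ (t : ℝ) x, q (t • x) = t ^ 2 * q x)
    (hpos : ∀ x, x ≠ 0 → 0 < q x) : ∃ δ > 0, ∀ x, δ * ‖x‖ ^ 2 ≤ q x := by
  obtain ⟨x₀, hx₀, hmin⟩ := (isCompact_sphere (0 : Vec 3) 1).exists_isMinOn
    (NormedSpace.sphere_nonempty.2 zero_le_one) hq.continuousOn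
  have h1 : ‖x₀‖ = 1 := mem_sphere_zero_iff_norm.1 hx₀
  refine ⟨q x₀, hpos _ (by rw [← norm_pos_iff, h1]; exact one_pos), fun x => ?_⟩
  by_cases hx : x = 0
  · have := hs 0 0
    rw [zero_smul] at this
    rw [hx, this, norm_zero]
    simp
  · have hn : 0 < ‖x‖ := norm_pos_iff.2 hx
    have h2 : q x₀ ≤ q (‖x‖⁻¹ • x) := hmin (mem_sphere_zero_iff_norm.2 (norm_smul_inv_norm hx))
    rw [hs] at h2
    calc q x₀ * ‖x‖ ^ 2 ≤ (‖x‖⁻¹ ^ 2 * q x) * ‖x‖ ^ 2 := by gcongr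
      _ = q x := by field_simp

/-- Three real weights whose combinations with the first three terms of geometric sequences of
ratios `1`, `x`, `y` vanish are zero (a Vandermonde argument). -/
lemma vandermonde_three {g : Fin 3 → ℝ} {A B x y : ℂ} (hA : A ≠ 0) (hB : B ≠ 0) (hx : x ≠ 1)
    (hy : y ≠ 1) (hxy : x ≠ y) (h0 : (g 0 : ℂ) + g 1 * A + g 2 * B = 0)
    (h1 : (g 0 : ℂ) + g 1 * (A * x) + g 2 * (B * y) = 0)
    (h2 : (g 0 : ℂ) + g 1 * (A * x ^ 2) + g 2 * (B * y ^ 2) = 0) :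
    g 0 = 0 ∧ g 1 = 0 ∧ g 2 = 0 := by
  have e2 : (g 2 : ℂ) * (B * (y - 1) * (y - x)) = 0 := by
    linear_combination h2 - (1 + x) * h1 + x * h0
  have hg2 : (g 2 : ℂ) = 0 := by
    rcases mul_eq_zero.1 e2 with h | h
    · exact h
    · exact absurd h (mul_ne_zero (mul_ne_zero hB (sub_ne_zero.2 hy)) (sub_ne_zero.2 hxy.symm))
  have e1 : (g 1 : ℂ) * (A * (x - 1)) = 0 := by
    linear_combination h1 - h0 - (B * (y - 1)) * hg2
  have hg1 : (g 1 : ℂ) = 0 := by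
    rcases mul_eq_zero.1 e1 with h | h
    · exact h
    · exact absurd h (mul_ne_zero hA (sub_ne_zero.2 hx))
  have hg0 : (g 0 : ℂ) = 0 := by
    linear_combination h0 - A * hg1 - B * hg2
  exact ⟨by exact_mod_cast hg0, by exact_mod_cast hg1, by exact_mod_cast hg2⟩

/-- The quadratic form is a sum of squares, because the three phases multiply to one; it degenerates
only if all the squares do, which `vandermonde_three` excludes as soon as `m ≥ 2`. -/
lemma quad_gap {m : ℕ} (hm : 2 ≤ m) {ε : Fin 3 → ℂ} (hn : ∀ k, ε k * conj (ε k) = 1)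
    (hprod : ε 0 * ε 1 * ε 2 = 1) (him : ∀ k, 0 < (ε k).im) {c : ℕ → ℝ}
    (hc : ∀ l ≤ m, 0 < c l) :
    ∃ δ > 0, ∀ g : Fin 3 → ℝ, δ * (g 0 ^ 2 + g 1 ^ 2 + g 2 ^ 2)
      ≤ (∑ l ∈ Finset.range (m + 1), c l) * (g 0 ^ 2 + g 1 ^ 2 + g 2 ^ 2)
        + 2 * ((∑ l ∈ Finset.range (m + 1), c l * (ε 0 ^ l * conj (ε 0) ^ (m - l)).re) * (g 1 * g 2)
          + (∑ l ∈ Finset.range (m + 1), c l * (ε 1 ^ l * conj (ε 1) ^ (m - l)).re) * (g 2 * g 0)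
          + (∑ l ∈ Finset.range (m + 1), c l * (ε 2 ^ l * conj (ε 2) ^ (m - l)).re)
            * (g 0 * g 1)) := by
  set α : Fin 3 → ℕ → ℂ := fun k l => ε k ^ l * conj (ε k) ^ (m - l) with hα
  have hαn (k l) : α k l * conj (α k l) = 1 := by
    have : α k l * conj (α k l) = (ε k * conj (ε k)) ^ l * (ε k * conj (ε k)) ^ (m - l) := by
      simp only [hα, map_mul, map_pow, Complex.conj_conj, mul_pow]; ring
    rw [this, hn]; simp
  have hαp (l) : α 0 l * α 1 l * α 2 l = 1 := by
    have : α 0 l * α 1 l * α 2 l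
        = (ε 0 * ε 1 * ε 2) ^ l * (conj (ε 0 * ε 1 * ε 2)) ^ (m - l) := by
      simp only [hα, map_mul, mul_pow]; ring
    rw [this, hprod]; simp
  have hε0 (k) : ε k ≠ 0 := fun h => by have := him k; rw [h] at this; simp at this
  have hεsq (k) : ε k ^ 2 ≠ 1 := by
    intro h
    have := him k
    rcases sq_eq_one_iff.1 h with h | h <;> rw [h] at this <;> simp at this
  set q : Vec 3 → ℝ := fun g => ∑ l ∈ Finset.range (m + 1), c l *
    Complex.normSq (g 0 + g 1 * α 2 l + g 2 * conj (α 1 l)) with hq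
  have hqc : Continuous q := by
    rw [hq]
    refine continuous_finsetSum _ fun l _ => continuous_const.mul
      (Complex.continuous_normSq.comp (by fun_prop))
  have hqs (t : ℝ) (x : Vec 3) : q (t • x) = t ^ 2 * q x := by
    simp only [hq, Finset.mul_sum]
    refine Finset.sum_congr rfl fun l _ => ?_
    rw [show (((t • x) 0 : ℝ) : ℂ) + ((t • x) 1 : ℝ) * α 2 l + ((t • x) 2 : ℝ) * conj (α 1 l)
      = (t : ℂ) * (x 0 + x 1 * α 2 l + x 2 * conj (α 1 l)) by simp; ring]
    rw [map_mul, Complex.normSq_ofReal]; ring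
  have hqp (x : Vec 3) (hx : x ≠ 0) : 0 < q x := by
    have hnn : ∀ l ∈ Finset.range (m + 1), 0 ≤ c l *
        Complex.normSq (x 0 + x 1 * α 2 l + x 2 * conj (α 1 l)) := fun l hl =>
      mul_nonneg (hc l (by simp at hl; omega)).le (Complex.normSq_nonneg _)
    refine (Finset.sum_nonneg hnn).lt_of_ne fun h => hx ?_
    have hz (l) (hl : l ≤ m) : (x 0 : ℂ) + x 1 * α 2 l + x 2 * conj (α 1 l) = 0 := by
      have := (Finset.sum_eq_zero_iff_of_nonneg hnn).1 h.symm l (by simp; omega)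
      exact Complex.normSq_eq_zero.1 ((mul_eq_zero.1 this).resolve_left (hc l hl).ne')
    have hstep (k l) (hl : l + 1 ≤ m) : α k (l + 1) = α k l * ε k ^ 2 := by
      simp only [hα]
      rw [show m - l = m - (l + 1) + 1 by omega, pow_succ, pow_succ]
      linear_combination -(ε k ^ l * ε k * conj (ε k) ^ (m - (l + 1))) * hn k
    have hα0 (k l) : α k l ≠ 0 := left_ne_zero_of_mul_eq_one (hαn k l)
    have hcj : conj (ε 1) * ε 1 = 1 := by rw [mul_comm]; exact hn 1
    obtain ⟨g0, g1, g2⟩ := vandermonde_three (g := fun i => x i) (A := α 2 0) (B := conj (α 1 0))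
      (x := ε 2 ^ 2) (y := conj (ε 1) ^ 2) (hα0 _ _) (by simpa using hα0 1 0) (hεsq 2)
      (by
        intro h
        apply hεsq 1
        have : (conj (ε 1) * ε 1) ^ 2 = 1 := by rw [hcj, one_pow]
        rwa [mul_pow, h, one_mul] at this)
      (by
        intro h
        apply hεsq 0
        have h3 : (ε 0 * ε 1 * ε 2) ^ 2 = 1 := by rw [hprod, one_pow]
        have h4 : (conj (ε 1) * ε 1) ^ 2 = 1 := by rw [hcj, one_pow]
        rw [mul_pow, mul_pow, h] at h3
        linear_combination h3 - ε 0 ^ 2 * h4)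
      (hz 0 (by omega))
      (by
        have := hz 1 (by omega)
        rw [hstep 2 0 (by omega), hstep 1 0 (by omega), map_mul, map_pow] at this
        exact this)
      (by
        have := hz 2 (by omega)
        rw [hstep 2 1 (by omega), hstep 1 1 (by omega), hstep 2 0 (by omega),
          hstep 1 0 (by omega), map_mul, map_mul, map_pow] at this
        linear_combination this)
    ext i
    fin_cases i
    · exact g0
    · exact g1
    · exact g2
  obtain ⟨δ, hδ, hle⟩ := exists_coercive hqc hqs hqp
  refine ⟨δ, hδ, fun g => ?_⟩
  have h := hle (WithLp.toLp 2 g)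
  rw [EuclideanSpace.real_norm_sq_eq, Fin.sum_univ_three] at h
  refine h.trans (le_of_eq ?_)
  simp only [hq, Finset.sum_mul, Finset.mul_sum, ← Finset.sum_add_distrib]
  refine Finset.sum_congr rfl fun l _ => ?_
  have p1 := hαn 1 l
  have p2 := hαn 2 l
  have e0 : α 0 l = conj (α 1 l) * conj (α 2 l) := by
    linear_combination conj (α 1 l) * conj (α 2 l) * hαp l - α 0 l * α 2 l * conj (α 2 l) * p1
      - α 0 l * p2
  change c l * _ = c l * _ + 2 * (c l * (α 0 l).re * _ + c l * (α 1 l).re * _ + c l * (α 2 l).re * _)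
  rw [e0]
  rw [Complex.mul_conj] at p1 p2
  have p1 : Complex.normSq (α 1 l) = 1 := by exact_mod_cast p1
  have p2 : Complex.normSq (α 2 l) = 1 := by exact_mod_cast p2
  rw [Complex.normSq_apply] at p1 p2
  rw [Complex.normSq_apply]
  simp
  linear_combination c l * g 1 ^ 2 * p2 + c l * g 2 ^ 2 * p1

end quadratic

section assembly
variable {e : ℕ}

/-- The bilinear form `Q_k` on spherical harmonics of degree `m + 1` is a multiple of the `L²`
pairing. -/
lemma Qform_eq {r : Fin 3 → ℝ} (hr : ∀ j, 0 < r j) {i j k : Fin 3} {m : ℕ} {F G : Vec (e + 2) → ℝ}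
    {P R : MvPolynomial (Fin (e + 2)) ℝ} (hR : R.IsHomogeneous (m + 1)) (hRl : lap R = 0)
    (hF : ∀ x : Vec (e + 2), ‖x‖ = 1 → F x = ev P x) (hG : ∀ x : Vec (e + 2), ‖x‖ = 1 → G x = ev R x)
    (hs : (r k ^ 2 - r i ^ 2 - r j ^ 2) / (2 * r i * r j) ∈ Ioo (-1 : ℝ) 1) :
    Qform r i j k F G = - (discD e m ((r k ^ 2 - r i ^ 2 - r j ^ 2) / (2 * r i * r j)) *
      ∫ x : Metric.sphere (0 : Vec (e + 2)) 1, ev P x * ev R x ∂(sphereMeasure (e + 2))) := by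
  set s := (r k ^ 2 - r i ^ 2 - r j ^ 2) / (2 * r i * r j) with hsdef
  have hi := hr i
  have hj := hr j
  have hk := hr k
  have hse : 2 * r i * r j * s = r k ^ 2 - r i ^ 2 - r j ^ 2 := by
    rw [hsdef]; field_simp
  unfold Qform
  rw [← integral_const_mul, ← integral_neg]
  refine integral_congr_ae (.of_forall fun x => ?_)
  simp only
  have hx : ‖(x : Vec (e + 2))‖ = 1 := mem_sphere_zero_iff_norm.1 x.2
  have hcap := capI_eq m hR hRl hx hs
  have h1 : ∀ y : Metric.sphere (0 : Vec (e + 2)) 1,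
      F x * G y * (if ‖r i • (x : Vec (e + 2)) + r j • (y : Vec (e + 2))‖ ≤ r k then (1 : ℝ) else 0)
      = ev P x * (ev R y * (if inner ℝ (x : Vec (e + 2)) (y : Vec (e + 2)) ≤ s then 1 else 0)) := by
    intro y
    have hy : ‖(y : Vec (e + 2))‖ = 1 := mem_sphere_zero_iff_norm.1 y.2
    have hiff : ‖r i • (x : Vec (e + 2)) + r j • (y : Vec (e + 2))‖ ≤ r k ↔
        inner ℝ (x : Vec (e + 2)) (y : Vec (e + 2)) ≤ s := by
      have hp : 0 < 2 * r i * r j := by positivity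
      rw [← sq_le_sq₀ (norm_nonneg _) hk.le, norm_add_sq_real, norm_smul, norm_smul, hx, hy,
        inner_smul_left, inner_smul_right, Real.norm_of_nonneg hi.le, Real.norm_of_nonneg hj.le,
        ← mul_le_mul_iff_right₀ hp (c := s), hse]
      simp only [conj_trivial]
      constructor <;> intro <;> linarith
    rw [hF _ hx, hG _ hy, mul_assoc]
    simp only [hiff]
  simp only [h1]
  rw [integral_const_mul]
  change ev P x * capI R x s = _
  rw [hcap]
  ring

lemma L2sq_eq {d : ℕ} {G : Vec d → ℝ} {P : MvPolynomial (Fin d) ℝ}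
    (hG : ∀ x : Vec d, ‖x‖ = 1 → G x = ev P x) :
    L2sq G = ∫ x : Metric.sphere (0 : Vec d) 1, ev P x * ev P x ∂(sphereMeasure d) := by
  unfold L2sq
  refine integral_congr_ae (.of_forall fun x => ?_)
  simp only
  rw [hG _ (mem_sphere_zero_iff_norm.1 x.2)]; ring

/-- A triangle with side lengths `a`, `b`, `c` is encoded by the phase
`ε = (c² - a² - b²)/(2ab) + i T/(ab)`, where `T` is twice the area. -/
def phase (T a b c : ℝ) : ℂ := ⟨(c ^ 2 - a ^ 2 - b ^ 2) / (2 * a * b), T / (a * b)⟩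

/-- Heron's expression for sixteen times the squared area of a triangle with sides `a`, `b`, `c`;
this is `4 * T ^ 2` when `T` is twice the area. -/
def heron (a b c : ℝ) : ℝ :=
  2 * (a ^ 2 * b ^ 2 + b ^ 2 * c ^ 2 + c ^ 2 * a ^ 2) - a ^ 4 - b ^ 4 - c ^ 4

lemma phase_sq {T a b c : ℝ} (ha : 0 < a) (hb : 0 < b) (hT : 4 * T ^ 2 = heron a b c) :
    (phase T a b c).re ^ 2 + (phase T a b c).im ^ 2 = 1 := by
  unfold heron at hT
  simp only [phase]
  field_simp
  linear_combination hT

lemma phase_prod {T a b c : ℝ} (ha : 0 < a) (hb : 0 < b) (hc : 0 < c)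
    (hT : 4 * T ^ 2 = heron a b c) :
    phase T b c a * phase T c a b * phase T a b c = 1 := by
  unfold heron at hT
  apply Complex.ext
  · simp only [phase, Complex.mul_re, Complex.mul_im, Complex.one_re]
    field_simp
    linear_combination (a ^ 2 + b ^ 2 + c ^ 2) * hT
  · simp only [phase, Complex.mul_re, Complex.mul_im, Complex.one_im]
    field_simp
    linear_combination (-T) * hT

/-- The cap formula evaluated at the cosine attached to a triangle. -/
lemma discD_phase (m : ℕ) {T a b c : ℝ} (hT0 : 0 < T) (ha : 0 < a) (hb : 0 < b)
    (hT : 4 * T ^ 2 = heron a b c) :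
    discD e m ((c ^ 2 - a ^ 2 - b ^ 2) / (2 * a * b))
      = (T / (a * b)) ^ (e + 1) * ∑ l ∈ Finset.range (m + 1), coefC e m l *
        (phase T a b c ^ l * (starRingEnd ℂ) (phase T a b c) ^ (m - l)).re :=
  discD_eq m (by positivity) (phase_sq ha hb hT)

lemma phase_re_mem {T a b c : ℝ} (hT0 : 0 < T) (ha : 0 < a) (hb : 0 < b)
    (hT : 4 * T ^ 2 = heron a b c) :
    (c ^ 2 - a ^ 2 - b ^ 2) / (2 * a * b) ∈ Ioo (-1 : ℝ) 1 := by
  have h := phase_sq ha hb hT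
  have h2 : 0 < (T / (a * b)) ^ 2 := by positivity
  simp only [phase] at h
  exact abs_lt.1 ((sq_lt_one_iff_abs_lt_one _).1 (by linarith))

/-- The spectral gap in dimension `e + 2` and degree `m + 1`. The constant is `1/2 - δ/(2v)`, where
`δ` is the coercivity constant of `quad_gap` and `v` the volume of the unit ball of `ℝ^{e+1}`. -/
lemma main_bound {r : Fin 3 → ℝ} (hr : StrictlyAdmissible r) {m : ℕ} (hm : 2 ≤ m) :
    ∃ A < (1 : ℝ) / 2, ∀ G : Fin 3 → Vec (e + 2) → ℝ,
      (∀ j, IsSphericalHarmonic (e + 2) (m + 1) (G j)) →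
      Qtot r G ≤ A * ∑ k : Fin 3, gammaCoef (e + 2) r k * r k ^ ((1 : ℝ) - (e + 2 : ℕ)) *
        L2sq (G k) := by
  obtain ⟨hpos, hadm⟩ := hr
  have a0 := hpos 0
  have a1 := hpos 1
  have a2 := hpos 2
  have t2 : r 2 < r 0 + r 1 := hadm 0 1 2 (by ext x; fin_cases x <;> simp)
  have t0 : r 0 < r 1 + r 2 := hadm 1 2 0 (by ext x; fin_cases x <;> simp)
  have t1 : r 1 < r 2 + r 0 := hadm 2 0 1 (by ext x; fin_cases x <;> simp)
  have hH : 0 < heron (r 0) (r 1) (r 2) := by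
    have : heron (r 0) (r 1) (r 2) = (r 0 + r 1 + r 2) * (r 1 + r 2 - r 0) * (r 2 + r 0 - r 1) *
      (r 0 + r 1 - r 2) := by unfold heron; ring
    rw [this]
    have := sub_pos.2 t0
    have := sub_pos.2 t1
    have := sub_pos.2 t2
    positivity
  obtain ⟨T, hT0, hT⟩ : ∃ T : ℝ, 0 < T ∧ 4 * T ^ 2 = heron (r 0) (r 1) (r 2) := by
    refine ⟨Real.sqrt (heron (r 0) (r 1) (r 2)) / 2, by positivity, ?_⟩
    rw [div_pow, Real.sq_sqrt hH.le]; ring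
  have hT1 : 4 * T ^ 2 = heron (r 1) (r 2) (r 0) := by rw [hT]; unfold heron; ring
  have hT2 : 4 * T ^ 2 = heron (r 2) (r 0) (r 1) := by rw [hT]; unfold heron; ring
  set ε : Fin 3 → ℂ := ![phase T (r 1) (r 2) (r 0), phase T (r 2) (r 0) (r 1),
    phase T (r 0) (r 1) (r 2)] with hε
  have hunit {a b c : ℝ} (ha : 0 < a) (hb : 0 < b) (h : 4 * T ^ 2 = heron a b c) :
      phase T a b c * (starRingEnd ℂ) (phase T a b c) = 1 := by
    rw [Complex.mul_conj, Complex.normSq_apply, ← sq, ← sq, phase_sq ha hb h, Complex.ofReal_one]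
  have hn : ∀ k, ε k * (starRingEnd ℂ) (ε k) = 1 := by
    intro k
    fin_cases k
    · exact hunit a1 a2 hT1
    · exact hunit a2 a0 hT2
    · exact hunit a0 a1 hT
  have him : ∀ k, 0 < (ε k).im := by
    intro k
    fin_cases k
    · exact div_pos hT0 (mul_pos a1 a2)
    · exact div_pos hT0 (mul_pos a2 a0)
    · exact div_pos hT0 (mul_pos a0 a1)
  obtain ⟨δ, hδ, hquad⟩ := quad_gap hm hn (phase_prod a0 a1 a2 hT) him
    (c := coefC e m) (fun l hl => coefC_pos hl)
  rw [sum_coefC] at hquad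
  set v := volume.real (Metric.closedBall (0 : Vec (e + 1)) 1) with hv
  have hv0 : 0 < v := by
    rw [hv, ← sum_coefC 0]
    simpa using coefC_pos (e := e) (le_refl 0)
  refine ⟨1 / 2 - δ / (2 * v), sub_lt_self _ (by positivity), fun G hG => ?_⟩
  choose P hP hPl hPG using hG
  -- `w k` is the square root of `γ_k r_k^{1-d} / v`, and `w i * w j = (T / (r i * r j))^(d-1)`.
  set w : Fin 3 → ℝ := fun k => (Real.sqrt T / r k) ^ (e + 1) with hw
  have hww (i j) : (T / (r i * r j)) ^ (e + 1) = w i * w j := by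
    simp only [hw]
    rw [← mul_pow, div_mul_div_comm, Real.mul_self_sqrt hT0.le]
  have hγ (k) (h : 4 * T ^ 2 = 4 * r k ^ 2 * r (k + 1) ^ 2
      - (r k ^ 2 + r (k + 1) ^ 2 - r (k + 2) ^ 2) ^ 2) :
      gammaCoef (e + 2) r k * r k ^ ((1 : ℝ) - (e + 2 : ℕ)) = v * (w k * w k) := by
    have hk := hpos k
    rw [gammaCoef_eq hpos hT0 k h, ← hww,
      show (1 : ℝ) - (e + 2 : ℕ) = -((e + 1 : ℕ) : ℝ) by push_cast; ring, Real.rpow_neg hk.le,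
      Real.rpow_natCast, mul_assoc, ← inv_pow, ← mul_pow]
    congr 2
    field_simp
  unfold heron at hT
  have hγ0 := hγ 0 (by rw [hT]; simp only [Fin.isValue, zero_add]; ring)
  have hγ1 := hγ 1 (by
    rw [hT, show (1 : Fin 3) + 1 = 2 from rfl, show (1 : Fin 3) + 2 = 0 from rfl]; ring)
  have hγ2 := hγ 2 (by
    rw [hT, show (2 : Fin 3) + 1 = 0 from rfl, show (2 : Fin 3) + 2 = 1 from rfl]; ring)
  change 4 * T ^ 2 = heron (r 0) (r 1) (r 2) at hT
  rw [Fin.sum_univ_three, hγ0, hγ1, hγ2, Qtot,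
    Qform_eq hpos (hP 2) (hPl 2) (hPG 1) (hPG 2) (phase_re_mem hT0 a1 a2 hT1),
    Qform_eq hpos (hP 0) (hPl 0) (hPG 2) (hPG 0) (phase_re_mem hT0 a2 a0 hT2),
    Qform_eq hpos (hP 1) (hPl 1) (hPG 0) (hPG 1) (phase_re_mem hT0 a0 a1 hT),
    discD_phase m hT0 a1 a2 hT1, discD_phase m hT0 a2 a0 hT2, discD_phase m hT0 a0 a1 hT,
    hww, hww, hww, L2sq_eq (hPG 0), L2sq_eq (hPG 1), L2sq_eq (hPG 2)]
  set θ : Fin 3 → ℝ := fun k => ∑ l ∈ Finset.range (m + 1), coefC e m l *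
        (ε k ^ l * (starRingEnd ℂ) (ε k) ^ (m - l)).re with hθ
  have hI (i j : Fin 3) : Integrable (fun x : Metric.sphere (0 : Vec (e + 2)) 1 =>
      ev (P i) x * ev (P j) x) (sphereMeasure (e + 2)) :=
    integrable_sphere (((continuous_ev _).comp continuous_subtype_val).mul
      ((continuous_ev _).comp continuous_subtype_val))
  set I : Fin 3 → Fin 3 → ℝ := fun i j => ∫ x : Metric.sphere (0 : Vec (e + 2)) 1,
    ev (P i) x * ev (P j) x ∂(sphereMeasure (e + 2)) with hIdef
  have hfin : 0 ≤ (v - δ) * (w 0 * w 0 * I 0 0 + w 1 * w 1 * I 1 1 + w 2 * w 2 * I 2 2)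
      + 2 * (θ 0 * (w 1 * w 2) * I 1 2 + θ 1 * (w 2 * w 0) * I 2 0 + θ 2 * (w 0 * w 1) * I 0 1) := by
    simp only [hIdef, ← integral_const_mul]
    rw [← integral_add ((hI 0 0).const_mul _) ((hI 1 1).const_mul _),
      ← integral_add (((hI 0 0).const_mul _).fun_add ((hI 1 1).const_mul _)) ((hI 2 2).const_mul _),
      ← integral_add ((hI 1 2).const_mul _) ((hI 2 0).const_mul _),
      ← integral_add (((hI 1 2).const_mul _).fun_add ((hI 2 0).const_mul _)) ((hI 0 1).const_mul _),
      ← integral_const_mul, ← integral_const_mul, ← integral_add]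
    · refine integral_nonneg fun x => ?_
      have := hquad fun k => w k * ev (P k) x
      simp only [Pi.zero_apply]
      change _ ≤ v * _ + 2 * (θ 0 * _ + θ 1 * _ + θ 2 * _) at this
      linarith
    · exact ((((hI 0 0).const_mul _).add ((hI 1 1).const_mul _)).add ((hI 2 2).const_mul _)).const_mul _
    · exact ((((hI 1 2).const_mul _).add ((hI 2 0).const_mul _)).add ((hI 0 1).const_mul _)).const_mul _
  change -(w 1 * w 2 * θ 0 * I 1 2) + -(w 2 * w 0 * θ 1 * I 2 0) + -(w 0 * w 1 * θ 2 * I 0 1)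
    ≤ (1 / 2 - δ / (2 * v)) * (v * (w 0 * w 0) * I 0 0 + v * (w 1 * w 1) * I 1 1
      + v * (w 2 * w 2) * I 2 2)
  rw [show (1 / 2 - δ / (2 * v)) * (v * (w 0 * w 0) * I 0 0 + v * (w 1 * w 1) * I 1 1
      + v * (w 2 * w 2) * I 2 2)
    = (v - δ) * (w 0 * w 0 * I 0 0 + w 1 * w 1 * I 1 1 + w 2 * w 2 * I 2 2) / 2 by field_simp]
  linarith

end assembly

end SpectralGap

/-- Strict spectral gap for the trilinear spherical form on spherical harmonics of
degree `n ≥ 3`. -/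
theorem Q_spectral_gap_degree_ge_three (d : ℕ) (hd : 2 ≤ d) (r : Fin 3 → ℝ)
    (hr : StrictlyAdmissible r) (n : ℕ) (hn : 3 ≤ n) :
    ∃ A < (1 : ℝ) / 2, ∀ G : Fin 3 → Vec d → ℝ,
      (∀ j, IsSphericalHarmonic d n (G j)) →
      Qtot r G ≤ A * ∑ k : Fin 3, gammaCoef d r k * r k ^ ((1 : ℝ) - d) * L2sq (G k) := by
  obtain ⟨e, rfl⟩ := Nat.exists_eq_add_of_le' hd
  obtain ⟨m, rfl⟩ : ∃ m, n = m + 1 := ⟨n - 1, by omega⟩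
  exact SpectralGap.main_bound hr (by omega)
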